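/- arXiv:0712.2153 — 7 statements merged into one kernel-verified Lean document; each statement's English description precedes it below -/
import Mathlib

section
/- Let n ≥ 7 and let 2 ≤ k < n. Then every transitive homomorphism ψ : B_n → Sym_k is cyclic, i.e. ψ(σ_1) = ψ(σ_2) = … = ψ(σ_{n−1}). -/
/-- The braid relations on `n-1` generators; generator `i : Fin (n-1)` stands for the
Artin generator `σ_{i+1}` (so the indexing is 0-based). The relations are
`σ_i σ_j = σ_j σ_i` for `|i-j| ≥ 2` and `σ_i σ_j σ_i = σ_j σ_i σ_j` for `|i-j| = 1`. -/
def braidRels (n : ℕ) : Set (FreeGroup (Fin (n - 1))) :=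
  { r | ∃ i j : Fin (n - 1), ((i : ℕ) + 2 ≤ (j : ℕ) ∨ (j : ℕ) + 2 ≤ (i : ℕ)) ∧
      r = FreeGroup.of i * FreeGroup.of j * (FreeGroup.of j * FreeGroup.of i)⁻¹ } ∪
  { r | ∃ i j : Fin (n - 1), (j : ℕ) = (i : ℕ) + 1 ∧
      r = FreeGroup.of i * FreeGroup.of j * FreeGroup.of i *
          (FreeGroup.of j * FreeGroup.of i * FreeGroup.of j)⁻¹ }

/-- The braid group `B_n`, given by the Artin presentation. -/
abbrev BraidGroup (n : ℕ) := PresentedGroup (braidRels n)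

/-- The Artin generator `σ_{i+1}` of the braid group `B_n`, for `i : Fin (n-1)`. -/
def σ {n : ℕ} (i : Fin (n - 1)) : BraidGroup n := PresentedGroup.of i

/-- A homomorphism to the symmetric group `Sym_k = Perm (Fin k)` is transitive if its
image acts transitively on the `k` points. -/
def IsTransitiveHom {G : Type*} [Group G] {k : ℕ} (φ : G →* Equiv.Perm (Fin k)) : Prop :=
  ∀ x y : Fin k, ∃ g : G, φ g x = y

/-- A homomorphism from `B_n` is cyclic if it sends all the generators `σ_1, …, σ_{n-1}`
to a single element. -/
def IsCyclicHom {n : ℕ} {H : Type*} [Group H] (ψ : BraidGroup n →* H) : Prop :=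
  ∀ i j : Fin (n - 1), ψ (σ i) = ψ (σ j)

/-!
Generators `s 0, …, s (m - 1)` satisfying the braid relations coincide as soon as two adjacent ones
commute. If `a = s 0` is a nontrivial permutation of at most `m` points, then `s 2, …, s (m - 1)`
lie in its centralizer, which acts on the fixed points of `a` and on its nontrivial cycles, two sets
of at most `m - 2` elements when `m ≥ 6`. By induction these generators become equal under both
actions. The common kernel of the actions is abelian, because on each cycle of `a` its elements
agree with powers of `a`, while the commutator subgroup of a braid group on at least five strands is
perfect; hence `s 2 = s 3`.

The induction lowers `m` by two and starts from three cases. For `m ≤ 2` the symmetric group is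
abelian, and for `m = 4` it is solvable, so perfectness applies again. For `m = 5` the pairs
`s 0, s 1` and `s 3, s 4` commute with each other, and an orbit count shows that on five points
one of the two pairs must itself commute.
-/

open MulAction

universe u

theorem isMulCommutative_of_card_le_five {G : Type*} [Group G] [Finite G]
    (hG : Nat.card G ≤ 5) : IsMulCommutative G := by
  have of_prime {p : ℕ} (hp : p.Prime) (h : Nat.card G = p) : IsMulCommutative G :=
    have : Fact p.Prime := ⟨hp⟩
    (isCyclic_of_prime_card h).isMulCommutative
  have hpos : 0 < Nat.card G := Nat.card_pos
  obtain h | h | h | h | h : Nat.card G = 1 ∨ Nat.card G = 2 ∨ Nat.card G = 3 ∨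
      Nat.card G = 2 ^ 2 ∨ Nat.card G = 5 := by omega
  · have := (Nat.card_eq_one_iff_unique.1 h).1
    infer_instance
  · exact of_prime Nat.prime_two h
  · exact of_prime Nat.prime_three h
  · exact IsPGroup.isMulCommutative_of_card_eq_prime_sq (p := 2) h
  · exact of_prime Nat.prime_five h

theorem isSolvable_alternatingGroup_of_card_eq_four {α : Type*} [Fintype α] [DecidableEq α]
    (hα : Nat.card α = 4) : Group.IsSolvable (alternatingGroup α) := by
  have := (alternatingGroup.kleinFour_isKleinFour hα).isMulCommutative
  refine ⟨2, ?_⟩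
  rw [derivedSeries_succ, derivedSeries_one, ← alternatingGroup.kleinFour_eq_commutator hα]
  exact Subgroup.commutator_self_eq_bot_iff.2 this

theorem isSolvable_perm_of_card_le_four {α : Type*} [Finite α] (hα : Nat.card α ≤ 4) :
    Group.IsSolvable (Equiv.Perm α) := by
  have := Fintype.ofFinite α
  have := isSolvable_alternatingGroup_of_card_eq_four (Nat.card_fin 4)
  have : Group.IsSolvable (Equiv.Perm (Fin 4)) :=
    Group.isSolvable_of_ker_le_range (alternatingGroup (Fin 4)).subtype Equiv.Perm.sign
      (Subgroup.range_subtype _).ge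
  obtain ⟨ι⟩ := Function.Embedding.nonempty_of_card_le (α := α) (β := Fin 4) (by simpa using hα)
  exact Group.isSolvable_of_isSolvable_injective (Equiv.Perm.viaEmbeddingHom_injective ι)

section CommutingActions

variable {H K X : Type*} [Group H] [Group K] [MulAction H X] [MulAction K X] {x y : X}

variable (H) in
/-- The elements of `H` act on the point `x` as if `H` were commutative. For commuting actions this
pointwise notion makes it possible to compare orbits of two groups through a common point. -/
def CommutesAt (x : X) : Prop := ∀ a b : H, a • b • x = b • a • x

namespace CommutesAt

theorem of_mem_orbit (h : CommutesAt H x) (hy : y ∈ orbit H x) : CommutesAt H y := by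
  obtain ⟨g, rfl⟩ := hy
  intro a b
  calc a • b • g • x = a • (b * g) • x := by rw [mul_smul]
    _ = (b * g) • a • x := h a (b * g)
    _ = b • a • g • x := by rw [mul_smul, h g a]

theorem of_smul [SMulCommClass K H X] (k : K) (h : CommutesAt H (k • x)) : CommutesAt H x := by
  intro a b
  apply MulAction.injective k
  simpa only [smul_comm k] using h a b

theorem of_isMulCommutative_range [IsMulCommutative (toPermHom H (orbit H x)).range] :
    CommutesAt H x := by
  intro a b
  have hab : toPermHom H (orbit H x) a * toPermHom H (orbit H x) b =
      toPermHom H (orbit H x) b * toPermHom H (orbit H x) a :=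
    setLike_mul_comm (S := Subgroup _) (s := (toPermHom H (orbit H x)).range) ⟨a, rfl⟩ ⟨b, rfl⟩
  exact congrArg Subtype.val (Equiv.congr_fun hab ⟨x, mem_orbit_self x⟩)

variable [Finite X]

theorem three_le_ncard_orbit (h : ¬ CommutesAt H x) : 3 ≤ (orbit H x).ncard := by
  contrapose! h
  have : IsMulCommutative (Equiv.Perm (orbit H x)) :=
    Equiv.Perm.isMulCommutative_iff_card_le_two.2 (by rw [Nat.card_coe_set_eq]; omega)
  exact of_isMulCommutative_range

theorem orbit_subset_orbit [SMulCommClass K H X] (hX : Nat.card X ≤ 5) (h : ¬ CommutesAt H x) :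
    orbit K x ⊆ orbit H x := by
  rintro _ ⟨k, rfl⟩
  by_contra hk
  have hdisj : Disjoint (orbit H x) (orbit H (k • x)) :=
    (orbit.eq_or_disjoint x (k • x)).resolve_left fun e => hk (e ▸ mem_orbit_self _)
  have hunion := Set.ncard_union_eq hdisj
  have hle := Set.ncard_le_card (orbit H x ∪ orbit H (k • x))
  have h₁ := three_le_ncard_orbit h
  have h₂ := three_le_ncard_orbit fun h' => h (of_smul k h')
  omega

/-- On an `H`-orbit contained in a `K`-orbit, an element of `H` is determined by the image of a
single point. -/
theorem of_orbit_subset_orbit [SMulCommClass H K X] (hX : Nat.card X ≤ 5)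
    (h : orbit H x ⊆ orbit K x) : CommutesAt H x := by
  let Q := (toPermHom H (orbit H x)).range
  let x₀ : orbit H x := ⟨x, mem_orbit_self x⟩
  have eval_injective : Function.Injective fun q : Q => q.1 x₀ := by
    rintro ⟨_, a, rfl⟩ ⟨_, b, rfl⟩ hab
    have hab : a • x = b • x := congrArg Subtype.val hab
    ext ⟨w, hw⟩
    obtain ⟨k, rfl⟩ := h hw
    change a • k • x = b • k • x
    rw [smul_comm a, smul_comm b, hab]
  have hQ : Nat.card Q ≤ 5 :=
    (Nat.card_le_card_of_injective _ eval_injective).trans <|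
      (Nat.card_le_card_of_injective _ Subtype.val_injective).trans hX
  have : IsMulCommutative Q := isMulCommutative_of_card_le_five hQ
  exact of_isMulCommutative_range

theorem forall_or_forall [SMulCommClass H K X] (hX : Nat.card X ≤ 5) :
    (∀ x : X, CommutesAt H x) ∨ ∀ y : X, CommutesAt K y := by
  have : SMulCommClass K H X := SMulCommClass.symm H K X
  by_contra! ⟨⟨x, hx⟩, ⟨y, hy⟩⟩
  obtain ⟨z, hzx, hzy⟩ : (orbit H x ∩ orbit K y).Nonempty := by
    by_contra hempty
    have hunion := Set.ncard_union_eq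
      (Set.disjoint_iff_inter_eq_empty.2 (Set.not_nonempty_iff_eq_empty.1 hempty))
    have hle := Set.ncard_le_card (orbit H x ∪ orbit K y)
    have hx₃ := three_le_ncard_orbit hx
    have hy₃ := three_le_ncard_orbit hy
    omega
  have hKz : ¬ CommutesAt K z := fun h => hy (h.of_mem_orbit (mem_orbit_symm.1 hzy))
  have hHz : CommutesAt H z := of_orbit_subset_orbit hX (orbit_subset_orbit hX hKz)
  exact hx (hHz.of_mem_orbit (mem_orbit_symm.1 hzx))

end CommutesAt

theorem commute_or_commute_of_card_le_five {X : Type*} [Finite X] (hX : Nat.card X ≤ 5)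
    {a b c d : Equiv.Perm X} (hac : Commute a c) (had : Commute a d) (hbc : Commute b c)
    (hbd : Commute b d) : Commute a b ∨ Commute c d := by
  let H := Subgroup.centralizer {c, d}
  let K := Subgroup.centralizer (H : Set (Equiv.Perm X))
  have commute_of_commutesAt {L : Subgroup (Equiv.Perm X)} (hL : ∀ x : X, CommutesAt L x)
      {f g : Equiv.Perm X} (hf : f ∈ L) (hg : g ∈ L) : Commute f g :=
    Equiv.ext fun x => hL x ⟨f, hf⟩ ⟨g, hg⟩
  have : SMulCommClass H K X :=
    ⟨fun h k x => Equiv.congr_fun (k.2 h h.2) x⟩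
  refine (CommutesAt.forall_or_forall (H := H) (K := K) hX).imp
    (fun h => commute_of_commutesAt h ?_ ?_) (fun h => commute_of_commutesAt h ?_ ?_)
  · rintro _ (rfl | rfl)
    exacts [hac.symm, had.symm]
  · rintro _ (rfl | rfl)
    exacts [hbc.symm, hbd.symm]
  · exact fun h hh => (hh c (by simp)).symm
  · exact fun h hh => (hh d (by simp)).symm

end CommutingActions

section Centralizers

open Subgroup

variable {X : Type*}

/-- The action of the centralizer of `a` on the fixed points of `a`, by restriction. -/
def centralizerToPermFixedPoints (a : Equiv.Perm X) :
    centralizer {a} →* Equiv.Perm (Function.fixedPoints a) where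
  toFun u := u.1.subtypePerm fun x => by
    have hu : a (u.1 x) = u.1 (a x) := Equiv.congr_fun (mem_centralizer_singleton_iff.1 u.2).symm x
    rw [Function.mem_fixedPoints_iff, Function.mem_fixedPoints_iff, hu, u.1.injective.eq_iff]
  map_one' := rfl
  map_mul' _ _ := rfl

theorem apply_eq_of_mem_ker_centralizerToPermFixedPoints {a : Equiv.Perm X}
    {u : centralizer {a}} (hu : u ∈ (centralizerToPermFixedPoints a).ker) {x : X} (hx : a x = x) :
    u.1 x = x :=
  congrArg Subtype.val (Equiv.congr_fun hu ⟨x, hx⟩)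

/-- On a cycle of `a`, both permutations agree with powers of `a`. -/
theorem commute_of_forall_sameCycle {a u v : Equiv.Perm X} (hu : Commute a u) (hv : Commute a v)
    (hau : ∀ x, a.SameCycle x (u x)) (hav : ∀ x, a.SameCycle x (v x)) : Commute u v := by
  ext x
  obtain ⟨p, hp⟩ := hau x
  obtain ⟨q, hq⟩ := hav x
  calc u (v x) = u ((a ^ q) x) := by rw [hq]
    _ = (a ^ q) (u x) := (Equiv.congr_fun (hu.zpow_left q).eq x).symm
    _ = (a ^ q) ((a ^ p) x) := by rw [hp]
    _ = (a ^ p) ((a ^ q) x) := by simp only [← Equiv.Perm.mul_apply, ← zpow_add, add_comm]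
    _ = (a ^ p) (v x) := by rw [hq]
    _ = v ((a ^ p) x) := Equiv.congr_fun (hv.zpow_left p).eq x
    _ = v (u x) := by rw [hp]

variable [Fintype X] [DecidableEq X]

theorem sameCycle_of_mem_ker_toPermHom {a : Equiv.Perm X} {u : centralizer {a}}
    (hu : u ∈ (Equiv.Perm.OnCycleFactors.toPermHom a).ker) {x : X} (hx : a x ≠ x) :
    a.SameCycle x (u.1 x) := by
  have hcomm : Commute u.1 (a.cycleOf x) :=
    (Equiv.Perm.OnCycleFactors.mem_ker_toPermHom_iff a u).1 hu _ <|
      Equiv.Perm.cycleOf_mem_cycleFactorsFinset_iff.2 (Equiv.Perm.mem_support.2 hx)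
  have hmoved : u.1 x ∈ (a.cycleOf x).support := by
    rw [Equiv.Perm.mem_support, ← Equiv.Perm.mul_apply, ← hcomm.eq, Equiv.Perm.mul_apply,
      u.1.injective.ne_iff, Equiv.Perm.cycleOf_apply_self]
    exact hx
  exact (Equiv.Perm.mem_support_cycleOf_iff.1 hmoved).1

/-- The action of the centralizer of `a` on the fixed points of `a` and on its nontrivial cycles. -/
def centralizerToPermProd (a : Equiv.Perm X) : centralizer {a} →*
    Equiv.Perm (Function.fixedPoints a) × Equiv.Perm a.cycleFactorsFinset :=
  (centralizerToPermFixedPoints a).prod (Equiv.Perm.OnCycleFactors.toPermHom a)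

instance isMulCommutative_ker_centralizerToPermProd (a : Equiv.Perm X) :
    IsMulCommutative (centralizerToPermProd a).ker := by
  have sameCycle {u : centralizer {a}} (hu : u ∈ (centralizerToPermProd a).ker) (x : X) :
      a.SameCycle x (u.1 x) := by
    rw [centralizerToPermProd, MonoidHom.ker_prod, mem_inf] at hu
    by_cases hx : a x = x
    · rw [apply_eq_of_mem_ker_centralizerToPermFixedPoints hu.1 hx]
    · exact sameCycle_of_mem_ker_toPermHom hu.2 hx
  have commute (u : centralizer {a}) : Commute a u.1 := (mem_centralizer_singleton_iff.1 u.2).symm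
  refine .of_comm fun u v => Subtype.ext (Subtype.ext ?_)
  exact commute_of_forall_sameCycle (commute u.1) (commute v.1) (sameCycle u.2) (sameCycle v.2)

theorem two_mul_card_cycleFactorsFinset_add_card_fixedPoints_le (a : Equiv.Perm X) :
    2 * Nat.card a.cycleFactorsFinset + Nat.card (Function.fixedPoints a) ≤ Nat.card X := by
  have hsum : a.cycleType.card • 2 ≤ a.cycleType.sum :=
    Multiset.card_nsmul_le_sum fun _ => Equiv.Perm.two_le_of_mem_cycleType
  have hcard : a.cycleType.card = a.cycleFactorsFinset.card := by
    simp only [Equiv.Perm.cycleType_def, Multiset.card_map, Finset.card_val]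
  have hfixed := Equiv.Perm.card_fixedPoints a
  have hle := a.support.card_le_univ
  rw [← Equiv.Perm.sum_cycleType] at hle
  rw [Nat.card_eq_fintype_card, Nat.card_eq_fintype_card, Nat.card_eq_fintype_card,
    Fintype.card_coe]
  rw [smul_eq_mul] at hsum
  omega

theorem card_cycleFactorsFinset_pos {a : Equiv.Perm X} (ha : a ≠ 1) :
    0 < Nat.card a.cycleFactorsFinset := by
  rw [Nat.card_eq_fintype_card, Fintype.card_coe, Finset.card_pos,
    Finset.nonempty_iff_ne_empty, ne_eq, Equiv.Perm.cycleFactorsFinset_eq_empty_iff]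
  exact ha

end Centralizers

section BraidFamilies

variable {G H : Type*} [Group G] [Group H] {m : ℕ}

/-- A family of `m` elements of a group satisfying Artin's braid relations. Such families correspond
to the homomorphisms from the braid group on `m + 1` strands; unlike homomorphisms they can be
shifted and corestricted without constructing maps between braid groups. -/
structure IsBraidFamily (s : Fin m → G) : Prop where
  commute : ∀ i j : Fin m, (i : ℕ) + 2 ≤ j → Commute (s i) (s j)
  braid : ∀ i j : Fin m, (j : ℕ) = i + 1 → s i * s j * s i = s j * s i * s j

theorem isBraidFamily_σ (n : ℕ) : IsBraidFamily (σ : Fin (n - 1) → BraidGroup n) where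
  commute i j hij := by
    have hrel := PresentedGroup.one_of_mem (rels := braidRels n) (.inl ⟨i, j, .inl hij, rfl⟩)
    rwa [map_mul, map_inv, mul_inv_eq_one] at hrel
  braid i j hij := by
    have hrel := PresentedGroup.one_of_mem (rels := braidRels n) (.inr ⟨i, j, hij, rfl⟩)
    rwa [map_mul, map_inv, mul_inv_eq_one] at hrel

namespace IsBraidFamily

variable {s : Fin m → G}

theorem map (hs : IsBraidFamily s) (f : G →* H) : IsBraidFamily (f ∘ s) where
  commute i j hij := (hs.commute i j hij).map f
  braid i j hij := by simp only [Function.comp_apply, ← map_mul, hs.braid i j hij]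

theorem codRestrict (hs : IsBraidFamily s) {K : Subgroup G} (hK : ∀ i, s i ∈ K) :
    IsBraidFamily fun i => (⟨s i, hK i⟩ : K) where
  commute i j hij := Subtype.ext (hs.commute i j hij)
  braid i j hij := Subtype.ext (hs.braid i j hij)

theorem natAdd {k : ℕ} {s : Fin (k + m) → G} (hs : IsBraidFamily s) :
    IsBraidFamily (s ∘ Fin.natAdd k) where
  commute i j hij := hs.commute _ _ (by simp only [Fin.val_natAdd]; omega)
  braid i j hij := hs.braid _ _ (by simp only [Fin.val_natAdd]; omega)

theorem apply_eq_of_commute (hs : IsBraidFamily s) {i j : Fin m} (hij : (j : ℕ) = i + 1)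
    (h : Commute (s i) (s j)) : s i = s j := by
  have hbraid := hs.braid i j hij
  rw [h.eq] at hbraid
  exact mul_left_cancel hbraid

theorem apply_eq_succ_iff (hs : IsBraidFamily s) {i j k : Fin m} (hij : (j : ℕ) = i + 1)
    (hjk : (k : ℕ) = j + 1) : s i = s j ↔ s j = s k := by
  have hik : Commute (s i) (s k) := hs.commute i k (by omega)
  constructor <;> intro h
  · exact hs.apply_eq_of_commute hjk (h ▸ hik)
  · exact hs.apply_eq_of_commute hij (h ▸ hik)

theorem forall_eq_of_commute (hs : IsBraidFamily s) {i j : Fin m} (hij : (j : ℕ) = i + 1)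
    (h : Commute (s i) (s j)) (k l : Fin m) : s k = s l := by
  have h_iff_zero : ∀ (p : ℕ) (hp : p + 1 < m),
      s ⟨p, by omega⟩ = s ⟨p + 1, hp⟩ ↔ s ⟨0, by omega⟩ = s ⟨1, by omega⟩ := by
    intro p
    induction p with
    | zero => exact fun _ => Iff.rfl
    | succ p ih => exact fun hp => (hs.apply_eq_succ_iff rfl rfl).symm.trans (ih (by omega))
  obtain ⟨j, hj⟩ := j
  obtain rfl : j = i + 1 := hij
  have h_zero_one := (h_iff_zero i hj).1 (hs.apply_eq_of_commute rfl h)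
  have h_eq_zero : ∀ (p : ℕ) (hp : p < m), s ⟨p, hp⟩ = s ⟨0, by omega⟩ := by
    intro p
    induction p with
    | zero => exact fun _ => rfl
    | succ p ih => exact fun hp => ((h_iff_zero p hp).2 h_zero_one).symm.trans (ih (by omega))
  exact (h_eq_zero k k.2).trans (h_eq_zero l l.2).symm

theorem forall_eq_of_isMulCommutative [IsMulCommutative G] (hs : IsBraidFamily s) (k l : Fin m) :
    s k = s l := by
  obtain hm | hm : m ≤ 1 ∨ 2 ≤ m := by omega
  · rw [Fin.ext (by omega : (k : ℕ) = l)]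
  · exact hs.forall_eq_of_commute (i := ⟨0, by omega⟩) (j := ⟨1, by omega⟩) rfl (mul_comm' _ _) k l

/-- The commutator subgroup of a braid group on at least five strands is perfect: modulo `⁅N, N⁆`
the elements `σ₁⁻¹σ₃` and `σ₁⁻¹σ₄` commute, hence so do `σ₃` and `σ₄`. -/
theorem inv_mul_mem_commutator (hm : 4 ≤ m) (hs : IsBraidFamily s) {N : Subgroup G} [N.Normal]
    (hN : ∀ i j, (s i)⁻¹ * s j ∈ N) (i j : Fin m) : (s i)⁻¹ * s j ∈ ⁅N, N⁆ := by
  let s₀ := s ⟨0, by omega⟩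
  let s₂ := s ⟨2, by omega⟩
  let s₃ := s ⟨3, by omega⟩
  let q := QuotientGroup.mk' ⁅N, N⁆
  have h₀₂ : Commute s₀ s₂ := hs.commute _ _ le_rfl
  have h₀₃ : Commute s₀ s₃ := hs.commute _ _ (by simp)
  have hq : Commute (q (s₀⁻¹ * s₂)) (q (s₀⁻¹ * s₃)) := by
    rw [← commutatorElement_eq_one_iff_commute, ← map_commutatorElement]
    exact (QuotientGroup.eq_one_iff _).2 (Subgroup.commutator_mem_commutator (hN _ _) (hN _ _))
  have h₂₃ : Commute (q s₂) (q s₃) := by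
    have hc₂ : Commute (q s₀) (q (s₀⁻¹ * s₂)) := ((Commute.refl s₀).inv_right.mul_right h₀₂).map q
    have hc₃ : Commute (q s₀) (q (s₀⁻¹ * s₃)) := ((Commute.refl s₀).inv_right.mul_right h₀₃).map q
    have h := ((Commute.refl (q s₀)).mul_right hc₃).mul_left (hc₂.symm.mul_right hq)
    simpa only [← map_mul, mul_inv_cancel_left] using h
  exact QuotientGroup.eq.1 ((hs.map q).forall_eq_of_commute rfl h₂₃ i j)

theorem forall_eq_of_isSolvable [hG : Group.IsSolvable G] (hm : 4 ≤ m) (hs : IsBraidFamily s)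
    (i j : Fin m) : s i = s j := by
  have h_derived (k : ℕ) : ∀ i j, (s i)⁻¹ * s j ∈ derivedSeries G k := by
    induction k with
    | zero => exact fun _ _ => Subgroup.mem_top _
    | succ k ih =>
      have := derivedSeries_normal G k
      exact hs.inv_mul_mem_commutator hm ih
  obtain ⟨k, hk⟩ := hG.solvable
  exact inv_mul_eq_one.1 (Subgroup.mem_bot.1 (hk ▸ h_derived k i j))

theorem forall_eq_of_map_eq (hm : 4 ≤ m) (hs : IsBraidFamily s) {f : G →* H}
    [hker : IsMulCommutative f.ker] (hf : ∀ i j, f (s i) = f (s j)) (i j : Fin m) : s i = s j := by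
  have h := hs.inv_mul_mem_commutator hm (fun i j => f.eq_iff.1 (hf j i)) i j
  rw [Subgroup.commutator_self_eq_bot_iff.2 hker] at h
  exact inv_mul_eq_one.1 (Subgroup.mem_bot.1 h)

end IsBraidFamily

end BraidFamilies

namespace IsBraidFamily

theorem forall_eq_of_card_le_five {X : Type*} [Finite X] (hX : Nat.card X ≤ 5)
    {m : ℕ} (hm : 5 ≤ m) {s : Fin m → Equiv.Perm X} (hs : IsBraidFamily s) (i j : Fin m) :
    s i = s j := by
  obtain h | h := commute_or_commute_of_card_le_five hX
    (hs.commute ⟨0, by omega⟩ ⟨3, by omega⟩ (by simp))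
    (hs.commute ⟨0, by omega⟩ ⟨4, by omega⟩ (by simp))
    (hs.commute ⟨1, by omega⟩ ⟨3, by omega⟩ (by simp))
    (hs.commute ⟨1, by omega⟩ ⟨4, by omega⟩ (by simp))
  · exact hs.forall_eq_of_commute rfl h i j
  · exact hs.forall_eq_of_commute rfl h i j

/-- Artin's induction: after removing `s 0` and `s 1` the family lies in the centralizer of `s 0`,
which acts on the fixed points and on the cycles of `s 0`, each at most `m + 4` in number. -/
theorem forall_eq_of_forall_card_le {X : Type u} [Finite X] {m : ℕ} (hX : Nat.card X ≤ m + 6)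
    {s : Fin (2 + (m + 4)) → Equiv.Perm X} (hs : IsBraidFamily s)
    (ih : ∀ (Y : Type u) [Finite Y], Nat.card Y ≤ m + 4 → ∀ t : Fin (m + 4) → Equiv.Perm Y,
      IsBraidFamily t → ∀ i j, t i = t j) (i j : Fin (2 + (m + 4))) : s i = s j := by
  classical
  have := Fintype.ofFinite X
  let a := s ⟨0, by omega⟩
  by_cases ha : a = 1
  · exact hs.forall_eq_of_commute (i := ⟨0, by omega⟩) (j := ⟨1, by omega⟩) rfl
      (ha ▸ Commute.one_left _) i j
  have mem_centralizer (i : Fin (m + 4)) : s (Fin.natAdd 2 i) ∈ Subgroup.centralizer {a} :=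
    Subgroup.mem_centralizer_singleton_iff.2 (hs.commute _ _ (by simp)).symm
  let t (i : Fin (m + 4)) : Subgroup.centralizer {a} := ⟨s (Fin.natAdd 2 i), mem_centralizer i⟩
  have ht : IsBraidFamily t := hs.natAdd.codRestrict mem_centralizer
  have hcard := two_mul_card_cycleFactorsFinset_add_card_fixedPoints_le a
  have hpos := card_cycleFactorsFinset_pos ha
  have on_fixedPoints := ih _ (by omega) _ (ht.map (centralizerToPermFixedPoints a))
  have on_cycles := ih _ (by omega) _ (ht.map (Equiv.Perm.OnCycleFactors.toPermHom a))
  have t_eq : t ⟨0, by omega⟩ = t ⟨1, by omega⟩ :=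
    ht.forall_eq_of_map_eq (by omega) (f := centralizerToPermProd a)
      (fun i j => Prod.ext (on_fixedPoints i j) (on_cycles i j)) _ _
  have s_eq : s ⟨2, by omega⟩ = s ⟨3, by omega⟩ := congrArg Subtype.val t_eq
  have h_commute : Commute (s ⟨2, by omega⟩) (s ⟨3, by omega⟩) := by rw [s_eq]
  exact hs.forall_eq_of_commute rfl h_commute i j

theorem forall_eq_of_card_le {m : ℕ} (hm : m ≠ 3) {X : Type u} [Finite X]
    (hX : Nat.card X ≤ m) {s : Fin m → Equiv.Perm X} (hs : IsBraidFamily s) (i j : Fin m) :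
    s i = s j := by
  induction m using Nat.strong_induction_on generalizing X with
  | _ m ih =>
    obtain hm₂ | rfl | rfl | ⟨k, rfl⟩ : m ≤ 2 ∨ m = 4 ∨ m = 5 ∨ ∃ k, m = 2 + (k + 4) := by
      by_cases h : 6 ≤ m
      · exact .inr (.inr (.inr ⟨m - 6, by omega⟩))
      · omega
    · have := Equiv.Perm.isMulCommutative_iff_card_le_two.2 (hX.trans hm₂)
      exact hs.forall_eq_of_isMulCommutative i j
    · have := isSolvable_perm_of_card_le_four hX
      exact hs.forall_eq_of_isSolvable le_rfl i j
    · exact hs.forall_eq_of_card_le_five hX le_rfl i j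
    · exact hs.forall_eq_of_forall_card_le (by omega)
        (fun Y _ hY t ht => ih (k + 4) (by omega) (by omega) hY ht) i j

end IsBraidFamily

theorem transitive_hom_small_is_cyclic_general {n : ℕ} (hn : n ≠ 4) {X : Type*} [Finite X]
    (hX : Nat.card X < n) (ψ : BraidGroup n →* Equiv.Perm X) : IsCyclicHom ψ :=
  ((isBraidFamily_σ n).map ψ).forall_eq_of_card_le (by omega) (by omega)

/-- Artin. Let `n ≥ 7` and `2 ≤ k < n`. Then every transitive
homomorphism `ψ : B_n → Sym_k` is cyclic. -/
theorem transitive_hom_small_is_cyclic (n k : ℕ) (hn : 7 ≤ n) (hk2 : 2 ≤ k) (hkn : k < n)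
    (ψ : BraidGroup n →* Equiv.Perm (Fin k)) (hψ : IsTransitiveHom ψ) :
    IsCyclicHom ψ :=
  transitive_hom_small_is_cyclic_general (by omega) (by rwa [Nat.card_fin]) ψ
end

section
/- Let n ≥ 7. Every transitive homomorphism ψ : B_n → Sym_n is either cyclic or conjugate to the standard homomorphism ρ_S, i.e. either ψ(σ_1) = … = ψ(σ_{n−1}), or there exists u ∈ Sym_n such that ψ(σ_i) = u (i, i+1) u^{−1} for all 1 ≤ i ≤ n−1. -/
/-- The image of the generator `σ_{i+1}` under the standard homomorphism
`ρ_S : B_k → Sym_k`: the transposition of the 0-based points `i` and `i+1`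
(that is, of the 1-based points `i+1` and `i+2`). -/
def stdGen (k : ℕ) (i : Fin (k - 1)) : Equiv.Perm (Fin k) :=
  Equiv.swap ⟨i, by have := i.isLt; omega⟩ ⟨(i : ℕ) + 1, by have := i.isLt; omega⟩

/-!
Two facts drive the proof.

Let `s₀, …, s_{m-1}` satisfy the braid relations. If adjacent terms `s_i, s_{i+1}` commute, they are
equal, and then all terms are equal. Consequently, if `m ≥ 4` and all the quotients `s_i / s_j`
commute, then the sequence is constant: `s₀ / s₁` commutes with `s₀ / s₃` and with `s₃`, hence with
`s₀`. It follows that a sequence is constant as soon as its image under a homomorphism with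
commutative kernel is.

Let now the `s_i` be permutations of a set `α` and put `t = s₀`. The terms `s₂, s₃, …` lie in the
centralizer of `t`, which acts on the fixed points of `t` and on the nontrivial cycles of `t`. The
common kernel of these two actions is commutative, because its elements act on each cycle as powers
of `t`. If both sets being acted on are small, both actions are constant on `s₂, s₃, …` by
induction, so the whole sequence is constant. Hence a nonconstant sequence of `m + 2` permutations
of `m + 3` points has an `s₀` with more than `m` fixed points, that is, a transposition; and
transpositions satisfying the braid relations form a chain `(p₀ p₁), (p₁ p₂), …`.

The induction starts with four permutations of at most four points, a case settled by the
solvability of `Sym_4`, and with five permutations of five points, a case settled by the fact that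
`Sym_5` does not contain two noncommutative subgroups centralizing each other.
-/

open Equiv Equiv.Perm

universe u

section BraidSequences

variable {G H : Type*} [Group G] [Group H] {m : ℕ} {s : ℕ → G}

/-- The terms `s 0, …, s (m - 1)` satisfy the braid relations, so that they are the images of the
Artin generators under a homomorphism from the braid group on `m + 1` strands. Indexing by `ℕ`
instead of `Fin m` makes passing to consecutive terms painless; the terms from `s m` on are
irrelevant. -/
structure IsBraidSeq (m : ℕ) (s : ℕ → G) : Prop where
  commute : ∀ ⦃i j⦄, i + 2 ≤ j → j < m → Commute (s i) (s j)
  braid : ∀ ⦃i⦄, i + 1 < m → s i * s (i + 1) * s i = s (i + 1) * s i * s (i + 1)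

/-- The terms `s 0, …, s (m - 1)` coincide: the counterpart for sequences of `IsCyclicHom`. -/
def IsCyclicSeq (m : ℕ) (s : ℕ → G) : Prop :=
  ∀ ⦃i⦄, i < m → ∀ ⦃j⦄, j < m → s i = s j

theorem eq_of_braid_of_commute {a b : G} (hbraid : a * b * a = b * a * b) (hab : Commute a b) :
    a = b :=
  mul_left_cancel (hbraid.trans (by rw [hab.eq]))

namespace IsBraidSeq

theorem map (h : IsBraidSeq m s) (f : G →* H) : IsBraidSeq m (f ∘ s) where
  commute _ _ hij hj := (h.commute hij hj).map f
  braid _ hi := by simp only [Function.comp_apply, ← map_mul, h.braid hi]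

theorem eq_succ_iff_succ_eq (h : IsBraidSeq m s) {i : ℕ} (hi : i + 2 < m) :
    s i = s (i + 1) ↔ s (i + 1) = s (i + 2) := by
  have hcomm : Commute (s i) (s (i + 2)) := h.commute le_rfl hi
  constructor <;> intro e
  · exact eq_of_braid_of_commute (h.braid hi) (e ▸ hcomm)
  · exact eq_of_braid_of_commute (h.braid (by lia)) (e ▸ hcomm)

theorem eq_succ_iff_zero_eq_one (h : IsBraidSeq m s) {i : ℕ} (hi : i + 1 < m) :
    s i = s (i + 1) ↔ s 0 = s 1 := by
  induction i with
  | zero => rfl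
  | succ i ih => rw [← h.eq_succ_iff_succ_eq hi, ih (by lia)]

theorem isCyclicSeq_of_eq_succ (h : IsBraidSeq m s) {i : ℕ} (hi : i + 1 < m)
    (e : s i = s (i + 1)) : IsCyclicSeq m s := by
  have eq_zero : ∀ j < m, s j = s 0 := by
    intro j hj
    induction j with
    | zero => rfl
    | succ j ih =>
      rw [← ih (by lia), (h.eq_succ_iff_zero_eq_one hj).2 ((h.eq_succ_iff_zero_eq_one hi).1 e)]
  exact fun j hj k hk => (eq_zero j hj).trans (eq_zero k hk).symm

theorem isCyclicSeq_of_commute_succ (h : IsBraidSeq m s) {i : ℕ} (hi : i + 1 < m)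
    (hcomm : Commute (s i) (s (i + 1))) : IsCyclicSeq m s :=
  h.isCyclicSeq_of_eq_succ hi (eq_of_braid_of_commute (h.braid hi) hcomm)

theorem isCyclicSeq_of_eq (h : IsBraidSeq m s) (hm : 4 ≤ m) {i j : ℕ} (hij : i < j) (hj : j < m)
    (e : s i = s j) : IsCyclicSeq m s := by
  obtain rfl | rfl | hij : j = i + 1 ∨ j = i + 2 ∨ i + 3 ≤ j := by lia
  · exact h.isCyclicSeq_of_eq_succ hj e
  · obtain hi | ⟨k, rfl⟩ : i + 3 < m ∨ ∃ k, i = k + 1 := by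
      cases i with
      | zero => left; lia
      | succ k => exact .inr ⟨k, rfl⟩
    · exact h.isCyclicSeq_of_commute_succ hi (e ▸ h.commute (by lia) hi)
    · exact h.isCyclicSeq_of_commute_succ (i := k) (by lia) (e ▸ h.commute (by lia) hj)
  · exact h.isCyclicSeq_of_commute_succ (i := i) (by lia) (e ▸ (h.commute (by lia) hj).symm)

theorem isCyclicSeq_of_commute_div (h : IsBraidSeq m s) (hm : 4 ≤ m)
    (hcomm : ∀ i < m, ∀ j < m, ∀ k < m, ∀ l < m, Commute (s i / s j) (s k / s l)) :
    IsCyclicSeq m s := by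
  have comm_three : Commute (s 0 / s 1) (s 3) := by
    rw [div_eq_mul_inv]
    exact (h.commute (by lia) (by lia)).mul_left (h.commute (by lia) (by lia)).inv_left
  have comm_zero : Commute (s 0 / s 1) (s 0) := by
    have := (hcomm 0 (by lia) 1 (by lia) 0 (by lia) 3 (by lia)).mul_right comm_three
    rwa [div_mul_cancel] at this
  have comm_one : Commute (s 1) (s 0) := by
    simpa [div_eq_mul_inv] using comm_zero.inv_left.mul_left (Commute.refl (s 0))
  exact h.isCyclicSeq_of_commute_succ (i := 0) (by lia) comm_one.symm

theorem isCyclicSeq_of_comp (h : IsBraidSeq m s) (hm : 4 ≤ m) (f : G →* H)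
    (hker : ∀ x ∈ f.ker, ∀ y ∈ f.ker, Commute x y) (hf : IsCyclicSeq m (f ∘ s)) :
    IsCyclicSeq m s := by
  have div_mem : ∀ i < m, ∀ j < m, s i / s j ∈ f.ker := fun i hi j hj => by
    rw [MonoidHom.mem_ker, map_div, div_eq_one]
    exact hf hi hj
  exact h.isCyclicSeq_of_commute_div hm fun i hi j hj k hk l hl =>
    hker _ (div_mem i hi j hj) _ (div_mem k hk l hl)

theorem isCyclicSeq_of_isSolvable [Group.IsSolvable G] (h : IsBraidSeq m s) (hm : 4 ≤ m) :
    IsCyclicSeq m s := by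
  have div_mem : ∀ n, ∀ i < m, ∀ j < m, s i / s j ∈ derivedSeries G n := by
    intro n
    induction n with
    | zero => simp
    | succ n ih =>
      let q := QuotientGroup.mk' (derivedSeries G (n + 1))
      have cyclic : IsCyclicSeq m (q ∘ s) := by
        refine (h.map q).isCyclicSeq_of_commute_div hm fun i hi j hj k hk l hl => ?_
        simp only [Function.comp_apply, ← map_div]
        rw [← commutatorElement_eq_one_iff_commute, ← map_commutatorElement,
          ← MonoidHom.mem_ker, QuotientGroup.ker_mk']
        exact Subgroup.commutator_mem_commutator (ih i hi j hj) (ih k hk l hl)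
      intro i hi j hj
      rw [← QuotientGroup.ker_mk' (derivedSeries G (n + 1)), MonoidHom.mem_ker, map_div,
        div_eq_one]
      exact cyclic hi hj
  obtain ⟨n, hn⟩ := Group.IsSolvable.solvable (G := G)
  intro i hi j hj
  rw [← div_eq_one, ← Subgroup.mem_bot, ← hn]
  exact div_mem n i hi j hj

theorem exists_centralizer (h : IsBraidSeq (m + 2) s) :
    ∃ r : ℕ → Subgroup.centralizer {s 0},
      IsBraidSeq m r ∧ ∀ i < m, (r i : G) = s (i + 2) := by
  have mem_centralizer (i : ℕ) (hi : i < m) : s (i + 2) ∈ Subgroup.centralizer {s 0} := by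
    rw [Subgroup.mem_centralizer_singleton_iff]
    exact (h.commute (by lia) (by lia)).symm.eq
  let r (i : ℕ) : Subgroup.centralizer {s 0} :=
    if hi : i < m then ⟨s (i + 2), mem_centralizer i hi⟩ else 1
  have coe_r (i : ℕ) (hi : i < m) : (r i : G) = s (i + 2) := by simp [r, hi]
  refine ⟨r, ⟨fun i j hij hj => Subtype.ext ?_, fun i hi => Subtype.ext ?_⟩, coe_r⟩
  · simpa [coe_r j hj, coe_r i (by lia)] using (h.commute (by lia) (by lia)).eq
  · simpa [coe_r (i + 1) hi, coe_r i (by lia)] using h.braid (by lia)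

end IsBraidSeq

end BraidSequences

section SmallDegree

theorem isSolvable_perm_of_natCard_eq_four {α : Type*} (hα : Nat.card α = 4) :
    Group.IsSolvable (Perm α) := by
  classical
  have : Finite α := Nat.finite_of_card_ne_zero (by lia)
  have := Fintype.ofFinite α
  have kleinFour : IsKleinFour (commutator (alternatingGroup α)) :=
    alternatingGroup.kleinFour_eq_commutator hα ▸ alternatingGroup.kleinFour_isKleinFour hα
  have : Group.IsSolvable (commutator (alternatingGroup α)) :=
    Group.isSolvable_of_comm (mul_comm_of_exponent_two kleinFour.exponent_two)
  have : Group.IsSolvable (alternatingGroup α) :=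
    (Group.isSolvable_iff_subgroup_quotient (commutator (alternatingGroup α))).2
      ⟨this, inferInstanceAs (Group.IsSolvable (Abelianization (alternatingGroup α)))⟩
  exact Group.isSolvable_of_ker_le_range (alternatingGroup α).subtype sign
    (Subgroup.range_subtype _).ge

theorem isSolvable_perm_of_natCard_le_four {α : Type*} [Finite α] (hα : Nat.card α ≤ 4) :
    Group.IsSolvable (Perm α) := by
  have := Fintype.ofFinite α
  obtain ⟨ι⟩ : Nonempty (α ↪ Fin 4) :=
    Function.Embedding.nonempty_of_card_le (by simpa using hα)
  have := isSolvable_perm_of_natCard_eq_four (Nat.card_fin 4)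
  exact Group.isSolvable_of_isSolvable_injective (viaEmbeddingHom_injective ι)

theorem commute_of_natCard_le_five {G : Type*} [Group G] [Finite G] (hG : Nat.card G ≤ 5)
    (a b : G) : Commute a b := by
  have hpos : 0 < Nat.card G := Nat.card_pos
  obtain h | h | h : Nat.card G = 1 ∨ (Nat.card G).Prime ∨ Nat.card G = 2 ^ 2 := by
    interval_cases Nat.card G <;> norm_num
  · have := (Nat.card_eq_one_iff_unique.1 h).1
    exact Subsingleton.elim _ _
  · have : Fact (Nat.card G).Prime := ⟨h⟩
    have := isCyclic_of_prime_card (α := G) rfl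
    exact mul_comm' a b
  · exact (IsPGroup.isMulCommutative_of_card_eq_prime_sq h).is_comm.comm a b

variable {G H α : Type*} [Group G] [Group H] [MulAction G α] [MulAction H α]

open MulAction

theorem smul_smul_comm_of_normal_stabilizer [Finite α] {a : α} (hnormal : (stabilizer G a).Normal)
    (hcard : (orbit G a).ncard ≤ 5) (g h : G) : g • h • a = h • g • a := by
  have hindex : Nat.card (G ⧸ stabilizer G a) = (orbit G a).ncard := index_stabilizer G a
  have : Finite (G ⧸ stabilizer G a) := Nat.finite_of_card_ne_zero <| by
    rw [hindex]
    exact ((Set.ncard_pos (Set.toFinite _)).2 (nonempty_orbit a)).ne'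
  have hcomm : Commute (g : G ⧸ stabilizer G a) h :=
    commute_of_natCard_le_five (hindex ▸ hcard) _ _
  have hmem : (g * h)⁻¹ * (h * g) ∈ stabilizer G a :=
    QuotientGroup.eq.1 hcomm.eq
  rw [mem_stabilizer_iff, mul_smul, inv_smul_eq_iff, mul_smul, mul_smul] at hmem
  exact hmem.symm

theorem three_le_ncard_orbit [Finite α] {g h : G} {a : α} (hgh : g • h • a ≠ h • g • a) :
    3 ≤ (orbit G a).ncard := by
  by_contra! hlt
  refine hgh (smul_smul_comm_of_normal_stabilizer ?_ (by lia) g h)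
  have hpos : 0 < (orbit G a).ncard := (Set.ncard_pos (Set.toFinite _)).2 (nonempty_orbit a)
  rw [← index_stabilizer] at hlt hpos
  obtain h1 | h2 : (stabilizer G a).index = 1 ∨ (stabilizer G a).index = 2 := by lia
  · rw [Subgroup.index_eq_one.1 h1]
    infer_instance
  · exact Subgroup.normal_of_index_eq_two h2

section Commuting

variable [SMulCommClass G H α]

open scoped Pointwise in
theorem smul_orbit_eq_orbit_smul_of_smulCommClass (h : H) (a : α) :
    h • orbit G a = orbit G (h • a) := by
  simp only [orbit, ← Set.image_smul, ← Set.range_comp, Function.comp_def, ← smul_comm _ h]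

theorem orbit_subset_orbit_of_natCard_lt [Finite α] {a : α}
    (hcard : Nat.card α < 2 * (orbit G a).ncard) : orbit H a ⊆ orbit G a := by
  rintro _ ⟨h, rfl⟩
  obtain heq | hdisj := orbit.eq_or_disjoint (G := G) (h • a) a
  · exact orbit_eq_iff.1 heq
  · have hunion := Set.ncard_union_eq hdisj
    have hle := Set.ncard_le_card (orbit G (h • a) ∪ orbit G a)
    rw [← smul_orbit_eq_orbit_smul_of_smulCommClass, Set.ncard_smul_set] at hunion
    rw [← smul_orbit_eq_orbit_smul_of_smulCommClass] at hle
    lia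

theorem stabilizer_normal_of_orbit_subset {a : α} (hsub : orbit H a ⊆ orbit G a) :
    (stabilizer H a).Normal where
  conj_mem n hn h := by
    obtain ⟨g, hg : g • a = h⁻¹ • a⟩ := hsub (mem_orbit a h⁻¹)
    rw [mem_stabilizer_iff, mul_smul, mul_smul, ← hg, ← smul_comm g n a, hn, hg, smul_inv_smul]

theorem smul_smul_comm_of_natCard_le_five [Finite α] (hα : Nat.card α ≤ 5) {g g' : G} {a : α}
    (hg : g • g' • a ≠ g' • g • a) (h h' : H) (b : α) : h • h' • b = h' • h • b := by
  by_contra hh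
  have hGa := three_le_ncard_orbit hg
  have hHb := three_le_ncard_orbit hh
  obtain ⟨c, hca, hcb⟩ : (orbit G a ∩ orbit H b).Nonempty := 
    Set.nonempty_inter_of_lt_ncard_add_ncard (by lia)
  rw [← orbit_eq_iff] at hca hcb
  have hsub : orbit H c ⊆ orbit G c := orbit_subset_orbit_of_natCard_lt (by rw [hca]; lia)
  have hbc : orbit G b = orbit G c := orbit_eq_iff.2 (hsub (hcb ▸ mem_orbit_self b))
  rw [hcb, ← hbc] at hsub
  refine hh (smul_smul_comm_of_normal_stabilizer (stabilizer_normal_of_orbit_subset hsub) ?_ h h')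
  exact (Set.ncard_le_card _).trans hα

end Commuting

theorem commute_or_commute_of_natCard_le_five {α : Type*} [Finite α] (hα : Nat.card α ≤ 5)
    {x y u v : Perm α} (hxu : Commute x u) (hxv : Commute x v) (hyu : Commute y u)
    (hyv : Commute y v) : Commute x y ∨ Commute u v := by
  let G := Subgroup.centralizer {u, v}
  let H := Subgroup.centralizer (G : Set (Perm α))
  have : SMulCommClass G H α := ⟨fun g h a =>
    (DFunLike.congr_fun (Subgroup.mem_centralizer_iff.1 h.2 g g.2) a :)⟩
  have hx : x ∈ G := by simp [G, Subgroup.mem_centralizer_iff, hxu.symm.eq, hxv.symm.eq]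
  have hy : y ∈ G := by simp [G, Subgroup.mem_centralizer_iff, hyu.symm.eq, hyv.symm.eq]
  have hu : u ∈ H := fun g hg => (hg u (by simp)).symm
  have hv : v ∈ H := fun g hg => (hg v (by simp)).symm
  by_contra! ⟨hxy, huv⟩
  obtain ⟨a, ha⟩ : ∃ a, x (y a) ≠ y (x a) := by
    by_contra! heq
    exact hxy (Equiv.ext heq)
  exact huv (Equiv.ext (smul_smul_comm_of_natCard_le_five hα (g := (⟨x, hx⟩ : G)) (g' := ⟨y, hy⟩)
    ha (⟨u, hu⟩ : H) ⟨v, hv⟩))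

end SmallDegree

section Centralizer

variable {α : Type*}

/-- The action of the centralizer of a permutation `t` on the fixed points of `t`. It complements
the action `OnCycleFactors.toPermHom t` on the nontrivial cycles of `t`. -/
def centralizerFixedPointsHom (t : Perm α) :
    Subgroup.centralizer {t} →* Perm (Function.fixedPoints t) where
  toFun g := (g : Perm α).subtypePerm fun a => by
    have hcomm : t ((g : Perm α) a) = (g : Perm α) (t a) :=
      DFunLike.congr_fun (Subgroup.mem_centralizer_iff.1 g.2 t rfl) a
    simp only [Function.mem_fixedPoints, Function.IsFixedPt, hcomm, EmbeddingLike.apply_eq_iff_eq]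
  map_one' := by ext; simp
  map_mul' _ _ := by ext; rfl

theorem commute_of_forall_sameCycle_s3 {t x y : Perm α} (hx : Commute t x) (hy : Commute t y)
    (hxt : ∀ a, t.SameCycle a (x a)) (hyt : ∀ a, t.SameCycle a (y a)) : Commute x y := by
  have apply_zpow {z : Perm α} (hz : Commute t z) (n : ℤ) (a : α) :
      z ((t ^ n) a) = (t ^ n) (z a) :=
    (DFunLike.congr_fun (hz.zpow_left n).eq a).symm
  refine Equiv.ext fun a => ?_
  obtain ⟨k, hk⟩ := hxt a
  obtain ⟨l, hl⟩ := hyt a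
  calc x (y a) = (t ^ l) ((t ^ k) a) := by rw [← hl, apply_zpow hx, hk]
    _ = (t ^ k) ((t ^ l) a) := zpow_apply_comm t l k
    _ = y (x a) := by rw [← hk, apply_zpow hy, hl]

variable [Fintype α] [DecidableEq α] {t : Perm α}

theorem sameCycle_apply_of_mem_ker {g : Subgroup.centralizer {t}}
    (hfixed : g ∈ (centralizerFixedPointsHom t).ker)
    (hcycles : g ∈ (OnCycleFactors.toPermHom t).ker) (a : α) :
    t.SameCycle a ((g : Perm α) a) := by
  by_cases ha : t a = a
  · have hga : (g : Perm α) a = a :=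
      congrArg Subtype.val (DFunLike.congr_fun hfixed (⟨a, ha⟩ : Function.fixedPoints t))
    rw [hga]
  · have hcomm : Commute (g : Perm α) (t.cycleOf a) :=
      (OnCycleFactors.mem_ker_toPermHom_iff t g).1 hcycles _
        (cycleOf_mem_cycleFactorsFinset_iff.2 (mem_support.2 ha))
    have hmoved : (g : Perm α) a ∈ (t.cycleOf a).support := by
      rw [mem_support, ← mul_apply, ← hcomm.eq, mul_apply, cycleOf_apply_self]
      exact fun h => ha ((g : Perm α).injective h)
    exact (mem_support_cycleOf_iff.1 hmoved).1

theorem commute_of_mem_ker_prod (x : Subgroup.centralizer {t})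
    (hx : x ∈ ((centralizerFixedPointsHom t).prod (OnCycleFactors.toPermHom t)).ker)
    (y : Subgroup.centralizer {t})
    (hy : y ∈ ((centralizerFixedPointsHom t).prod (OnCycleFactors.toPermHom t)).ker) :
    Commute x y := by
  rw [MonoidHom.ker_prod] at hx hy
  exact Subtype.ext (commute_of_forall_sameCycle_s3
    (Subgroup.mem_centralizer_iff.1 x.2 t rfl) (Subgroup.mem_centralizer_iff.1 y.2 t rfl)
    (sameCycle_apply_of_mem_ker hx.1 hx.2) (sameCycle_apply_of_mem_ker hy.1 hy.2)).eq

theorem two_mul_card_cycleFactorsFinset_le (t : Perm α) :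
    2 * t.cycleFactorsFinset.card ≤ Fintype.card α := by
  have hcard : t.cycleType.card • 2 ≤ t.cycleType.sum :=
    Multiset.card_nsmul_le_sum fun _ => two_le_of_mem_cycleType
  have hcycles : t.cycleType.card = t.cycleFactorsFinset.card := by simp [cycleType_def]
  have hsum := sum_cycleType_le t
  rw [hcycles, smul_eq_mul] at hcard
  lia

theorem card_support_add_natCard_fixedPoints (t : Perm α) :
    t.support.card + Nat.card (Function.fixedPoints t) = Nat.card α := by
  have hle := sum_cycleType_le t
  rw [Nat.card_eq_fintype_card, Nat.card_eq_fintype_card, card_fixedPoints, ← sum_cycleType]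
  lia

end Centralizer

namespace IsBraidSeq

section FewPoints

theorem two_le_card_support {α : Type*} [Fintype α] [DecidableEq α] {m : ℕ} {s : ℕ → Perm α}
    (h : IsBraidSeq m s) (hm : 2 ≤ m) (hs : ¬ IsCyclicSeq m s) : 2 ≤ (s 0).support.card := by
  refine two_le_card_support_of_ne_one fun hone => hs ?_
  exact h.isCyclicSeq_of_commute_succ (i := 0) (by lia) (hone ▸ Commute.one_left _)

variable {α : Type u} [Finite α] {m : ℕ} {s : ℕ → Perm α}

theorem isCyclicSeq_of_natCard_fixedPoints_le (h : IsBraidSeq (m + 2) s) (hm : 4 ≤ m)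
    (ih : ∀ {β : Type u} [Finite β] {r : ℕ → Perm β}, IsBraidSeq m r → Nat.card β ≤ m →
      IsCyclicSeq m r)
    (hα : Nat.card α ≤ 2 * m + 1) (hfixed : Nat.card (Function.fixedPoints (s 0)) ≤ m) :
    IsCyclicSeq (m + 2) s := by
  classical
  have := Fintype.ofFinite α
  have hcycles : Nat.card (s 0).cycleFactorsFinset ≤ m := by
    have := two_mul_card_cycleFactorsFinset_le (s 0)
    rw [Nat.card_eq_fintype_card] at hα
    rw [Nat.card_eq_fintype_card, Fintype.card_coe]
    lia
  obtain ⟨r, hr, coe_r⟩ := h.exists_centralizer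
  have hrcyclic : IsCyclicSeq m r :=
    hr.isCyclicSeq_of_comp hm
      ((centralizerFixedPointsHom (s 0)).prod (OnCycleFactors.toPermHom (s 0)))
      commute_of_mem_ker_prod
      fun i hi j hj => Prod.ext (ih (hr.map (centralizerFixedPointsHom (s 0))) hfixed hi hj)
        (ih (hr.map (OnCycleFactors.toPermHom (s 0))) hcycles hi hj)
  refine h.isCyclicSeq_of_eq_succ (i := 2) (by lia) ?_
  rw [← coe_r 0 (by lia), ← coe_r 1 (by lia), hrcyclic (i := 0) (by lia) (j := 1) (by lia)]

theorem isCyclicSeq_of_natCard_le (h : IsBraidSeq m s) (hm : 4 ≤ m) (hα : Nat.card α ≤ m) :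
    IsCyclicSeq m s := by
  induction m using Nat.strong_induction_on generalizing α with
  | _ m ih =>
    obtain rfl | rfl | ⟨k, rfl, hk⟩ : m = 4 ∨ m = 5 ∨ ∃ k, m = k + 2 ∧ 4 ≤ k := by
      obtain hlt | hge := Nat.lt_or_ge m 6
      · lia
      · exact .inr (.inr ⟨m - 2, by lia, by lia⟩)
    · have := isSolvable_perm_of_natCard_le_four hα
      exact h.isCyclicSeq_of_isSolvable le_rfl
    · obtain h01 | h34 := commute_or_commute_of_natCard_le_five hα
        (h.commute (i := 0) (j := 3) (by lia) (by lia))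
        (h.commute (i := 0) (j := 4) (by lia) (by lia))
        (h.commute (i := 1) (j := 3) (by lia) (by lia))
        (h.commute (i := 1) (j := 4) (by lia) (by lia))
      · exact h.isCyclicSeq_of_commute_succ (i := 0) (by lia) h01
      · exact h.isCyclicSeq_of_commute_succ (i := 3) (by lia) h34
    · classical
      have := Fintype.ofFinite α
      by_contra hs
      have hsupport := h.two_le_card_support (by lia) hs
      have hfixed := card_support_add_natCard_fixedPoints (s 0)
      exact hs <| h.isCyclicSeq_of_natCard_fixedPoints_le hk
        (fun hr hβ => ih k (by lia) hr hk hβ) (by lia) (by lia)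

theorem isSwap_zero [DecidableEq α] (h : IsBraidSeq m s) (hm : 6 ≤ m)
    (hα : Nat.card α ≤ m + 1) (hs : ¬ IsCyclicSeq m s) : (s 0).IsSwap := by
  have := Fintype.ofFinite α
  obtain ⟨k, rfl⟩ : ∃ k, m = k + 2 := ⟨m - 2, by lia⟩
  have hsupport := h.two_le_card_support (by lia) hs
  have hfixed := card_support_add_natCard_fixedPoints (s 0)
  have hlarge : k < Nat.card (Function.fixedPoints (s 0)) := by
    by_contra! hle
    exact hs <| h.isCyclicSeq_of_natCard_fixedPoints_le (by lia)
      (fun hr hβ => hr.isCyclicSeq_of_natCard_le (by lia) hβ) (by lia) hle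
  exact card_support_eq_two.1 (by lia)

end FewPoints

end IsBraidSeq

section Transpositions

variable {α : Type*} [DecidableEq α] {x y : Perm α}

theorem eq_swap_apply_of_isSwap (hx : x.IsSwap) {a : α} (ha : x a ≠ a) : x = swap a (x a) := by
  refine hx.isCycle.eq_swap_of_apply_apply_eq_self ha ?_
  obtain ⟨b, c, -, rfl⟩ := hx
  exact swap_apply_self b c a

theorem disjoint_of_isSwap_of_commute (hx : x.IsSwap) (hy : y.IsSwap) (hxy : Commute x y)
    (hne : x ≠ y) : x.Disjoint y := by
  intro a
  by_contra! ⟨hxa, hya⟩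
  have hx_eq := eq_swap_apply_of_isSwap hx hxa
  have hy_eq := eq_swap_apply_of_isSwap hy hya
  have hxya : x (y a) ≠ y a := by
    rw [← mul_apply, hxy.eq, mul_apply]
    exact fun h => hxa (y.injective h)
  rw [hx_eq] at hxya
  obtain ⟨-, h | h⟩ := swap_apply_ne_self_iff.1 hxya
  · exact hya h
  · exact hne (by rw [hx_eq, hy_eq, h])

theorem commute_of_isSwap_of_apply_eq_self (hx : x.IsSwap) {a : α} (hxa : x a ≠ a)
    (ha : y a = a) (hb : y (x a) = x a) : Commute x y := by
  have hconj : swap (y a) (y (x a)) = y * swap a (x a) * y⁻¹ := swap_apply_apply y a (x a)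
  rw [ha, hb, ← eq_swap_apply_of_isSwap hx hxa, eq_mul_inv_iff_mul_eq] at hconj
  exact hconj

theorem exists_apply_ne_self_and_apply_eq_self (hx : x.IsSwap) (hy : y.IsSwap) (hne : x ≠ y) :
    ∃ a, x a ≠ a ∧ y a = a := by
  obtain ⟨a, b, hab, rfl⟩ := hx
  by_contra! hall
  have hya : y a ≠ a := hall a (by simpa using hab.symm)
  have hyb : y b ≠ b := hall b (by simpa using hab)
  have hy_eq := eq_swap_apply_of_isSwap hy hya
  rw [hy_eq] at hyb
  obtain ⟨-, h | h⟩ := swap_apply_ne_self_iff.1 hyb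
  · exact hab h.symm
  · exact hne (by rw [hy_eq, h])

/-- The points `a, s 0 a, s 1 (s 0 a), …` visited when the permutations of a sequence `s` are
applied to `a` one after the other. If `s i = (p i, p (i + 1))`, this recovers `p` from `p 0`. -/
def pointPath {α : Type*} (s : ℕ → Perm α) (a : α) : ℕ → α
  | 0 => a
  | i + 1 => s i (pointPath s a i)

namespace IsBraidSeq

variable {m : ℕ} {s : ℕ → Perm α} {a : α}

theorem isSwap (h : IsBraidSeq m s) (h0 : (s 0).IsSwap) {i : ℕ} (hi : i < m) : (s i).IsSwap := by
  induction i with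
  | zero => exact h0
  | succ i ih =>
    have hconj : s (i + 1) = (s i * s (i + 1)) * s i * (s i * s (i + 1))⁻¹ := by
      rw [eq_mul_inv_iff_mul_eq, h.braid hi, mul_assoc]
    obtain ⟨b, c, hbc, hswap⟩ := ih (by lia)
    rw [hconj]
    nth_rewrite 2 [hswap]
    rw [← swap_apply_apply]
    exact ⟨_, _, (s i * s (i + 1)).injective.ne hbc, rfl⟩

theorem disjoint (h : IsBraidSeq m s) (hm : 4 ≤ m) (hs : ¬ IsCyclicSeq m s)
    (h0 : (s 0).IsSwap) {i j : ℕ} (hij : i + 2 ≤ j) (hj : j < m) : (s i).Disjoint (s j) :=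
  disjoint_of_isSwap_of_commute (h.isSwap h0 (by lia)) (h.isSwap h0 hj) (h.commute hij hj)
    fun e => hs (h.isCyclicSeq_of_eq hm (by lia) hj e)

theorem apply_pointPath_ne_self (h : IsBraidSeq m s) (hm : 4 ≤ m) (hs : ¬ IsCyclicSeq m s)
    (h0 : (s 0).IsSwap) (ha0 : s 0 a ≠ a) (ha1 : s 1 a = a) {i : ℕ} (hi : i < m) :
    s i (pointPath s a i) ≠ pointPath s a i ∧
      (i + 1 < m → s (i + 1) (pointPath s a i) = pointPath s a i) := by
  induction i with
  | zero => exact ⟨ha0, fun _ => ha1⟩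
  | succ i ih =>
    obtain ⟨hmoved, hfixed⟩ := ih (by lia)
    refine ⟨fun e => hs ?_, fun hi' => ?_⟩
    · exact h.isCyclicSeq_of_commute_succ hi
        (commute_of_isSwap_of_apply_eq_self (h.isSwap h0 (by lia)) hmoved (hfixed hi) e)
    · exact (h.disjoint hm hs h0 le_rfl hi' _).resolve_left fun e => hmoved ((s i).injective e)

theorem pointPath_injOn (h : IsBraidSeq m s) (hm : 4 ≤ m) (hs : ¬ IsCyclicSeq m s)
    (h0 : (s 0).IsSwap) (ha0 : s 0 a ≠ a) (ha1 : s 1 a = a) :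
    Set.InjOn (pointPath s a) (Set.Iic m) := by
  have moved {i : ℕ} (hi : i < m) := h.apply_pointPath_ne_self hm hs h0 ha0 ha1 hi
  have ne_of_le {i k : ℕ} (hik : i ≤ k) (hk : k < m) : pointPath s a i ≠ pointPath s a (k + 1) := by
    intro e
    have hk_moved : s k (pointPath s a i) ≠ pointPath s a i := by
      rw [e]
      exact fun e' => (moved hk).1 ((s k).injective e')
    obtain rfl | rfl | hik : k = i ∨ k = i + 1 ∨ i + 2 ≤ k := by lia
    · exact (moved hk).1 e.symm
    · exact hk_moved ((moved (by lia)).2 hk)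
    · exact hk_moved ((h.disjoint hm hs h0 hik hk _).resolve_left (moved (by lia)).1)
  have ne_of_lt {i j : ℕ} (hij : i < j) (hj : j ≤ m) : pointPath s a i ≠ pointPath s a j := by
    obtain ⟨k, rfl⟩ := Nat.exists_eq_add_one_of_ne_zero (Nat.ne_zero_of_lt hij)
    exact ne_of_le (by lia) hj
  intro i hi j hj e
  by_contra hij
  obtain hlt | hlt := Nat.lt_or_gt_of_ne hij
  · exact ne_of_lt hlt hj e
  · exact ne_of_lt hlt hi e.symm

theorem exists_eq_swap (h : IsBraidSeq m s) (hm : 4 ≤ m) (hs : ¬ IsCyclicSeq m s)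
    (h0 : (s 0).IsSwap) :
    ∃ p : ℕ → α, Set.InjOn p (Set.Iic m) ∧ ∀ i < m, s i = swap (p i) (p (i + 1)) := by
  obtain ⟨a, ha0, ha1⟩ := exists_apply_ne_self_and_apply_eq_self h0
    (h.isSwap h0 (i := 1) (by lia)) fun e => hs (h.isCyclicSeq_of_eq_succ (i := 0) (by lia) e)
  exact ⟨pointPath s a, h.pointPath_injOn hm hs h0 ha0 ha1, fun i hi =>
    eq_swap_apply_of_isSwap (h.isSwap h0 hi) (h.apply_pointPath_ne_self hm hs h0 ha0 ha1 hi).1⟩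

end IsBraidSeq

end Transpositions

section BraidGroups

variable {n : ℕ} {H : Type*} [Group H]

theorem commute_σ {i j : Fin (n - 1)} (hij : (i : ℕ) + 2 ≤ j) :
    Commute (σ i : BraidGroup n) (σ j) :=
  PresentedGroup.mk_eq_mk_of_mul_inv_mem (.inl ⟨i, j, .inl hij, rfl⟩)

theorem σ_mul_σ_mul_σ {i j : Fin (n - 1)} (hij : (j : ℕ) = i + 1) :
    (σ i * σ j * σ i : BraidGroup n) = σ j * σ i * σ j :=
  PresentedGroup.mk_eq_mk_of_mul_inv_mem (.inr ⟨i, j, hij, rfl⟩)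

/-- The images of the Artin generators of `BraidGroup n` under a homomorphism, as a sequence indexed
by `ℕ` that is continued by `1`. -/
def generatorImages (ψ : BraidGroup n →* H) (i : ℕ) : H :=
  if hi : i < n - 1 then ψ (σ ⟨i, hi⟩) else 1

theorem generatorImages_of_lt (ψ : BraidGroup n →* H) {i : ℕ} (hi : i < n - 1) :
    generatorImages ψ i = ψ (σ ⟨i, hi⟩) :=
  dif_pos hi

theorem isBraidSeq_generatorImages (ψ : BraidGroup n →* H) :
    IsBraidSeq (n - 1) (generatorImages ψ) where
  commute i j hij hj := by
    rw [generatorImages_of_lt ψ hj, generatorImages_of_lt ψ (by lia : i < n - 1)]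
    exact (commute_σ hij).map ψ
  braid i hi := by
    rw [generatorImages_of_lt ψ hi, generatorImages_of_lt ψ (by lia : i < n - 1)]
    simp only [← map_mul, σ_mul_σ_mul_σ (i := ⟨i, by lia⟩) (j := ⟨i + 1, hi⟩) rfl]

theorem isCyclicHom_of_isCyclicSeq {ψ : BraidGroup n →* H}
    (hψ : IsCyclicSeq (n - 1) (generatorImages ψ)) : IsCyclicHom ψ := fun i j => by
  rw [← generatorImages_of_lt ψ i.2, ← generatorImages_of_lt ψ j.2, hψ i.2 j.2]

theorem exists_equiv_fin_of_injOn {α : Type*} [Finite α] (hα : Nat.card α = n) {p : ℕ → α}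
    (hp : Set.InjOn p (Set.Iio n)) : ∃ u : Fin n ≃ α, ∀ i, u i = p i := by
  have hinj : Function.Injective fun i : Fin n => p i :=
    fun i j e => Fin.ext (hp i.2 j.2 e)
  exact ⟨.ofBijective _ (hinj.bijective_of_nat_card_le (by simp [hα])), fun _ => rfl⟩

theorem permCongr_swap {α β : Type*} [DecidableEq α] [DecidableEq β] (e : α ≃ β) (a b : α) :
    e.permCongr (swap a b) = swap (e a) (e b) :=
  symm_trans_swap_trans a b e

theorem transitive_hom_to_symn_cyclic_or_standard_general (hn : 7 ≤ n) {α : Type*}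
    (hα : Nat.card α = n) (ψ : BraidGroup n →* Perm α) :
    IsCyclicHom ψ ∨ ∃ u : Fin n ≃ α, ∀ i : Fin (n - 1), ψ (σ i) = u.permCongr (stdGen n i) := by
  classical
  have : Finite α := Nat.finite_of_card_ne_zero (by lia)
  have hbraid := isBraidSeq_generatorImages ψ
  by_cases hcyclic : IsCyclicSeq (n - 1) (generatorImages ψ)
  · exact .inl (isCyclicHom_of_isCyclicSeq hcyclic)
  · have hswap := hbraid.isSwap_zero (by lia) (by lia) hcyclic
    obtain ⟨p, hinj, hp⟩ := hbraid.exists_eq_swap (by lia) hcyclic hswap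
    obtain ⟨u, hu⟩ := exists_equiv_fin_of_injOn hα
      (hinj.mono fun i (hi : i < n) => Set.mem_Iic.2 (by lia))
    refine .inr ⟨u, fun i => ?_⟩
    rw [← generatorImages_of_lt ψ i.2, hp i i.2, stdGen, permCongr_swap, hu, hu]

end BraidGroups

/-- Artin. Let `n ≥ 7`. Every transitive homomorphism
`ψ : B_n → Sym_n` is either cyclic or conjugate to the standard homomorphism `ρ_S`,
i.e. there is `u ∈ Sym_n` with `ψ(σ_i) = u (i, i+1) u⁻¹` for all `i`. -/
theorem transitive_hom_to_symn_cyclic_or_standard (n : ℕ) (hn : 7 ≤ n)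
    (ψ : BraidGroup n →* Equiv.Perm (Fin n)) (hψ : IsTransitiveHom ψ) :
    IsCyclicHom ψ ∨
      ∃ u : Equiv.Perm (Fin n), ∀ i : Fin (n - 1), ψ (σ i) = u * stdGen n i * u⁻¹ := by
  simpa only [Equiv.permCongr_eq_mul] using
    transitive_hom_to_symn_cyclic_or_standard_general hn (Nat.card_fin n) ψ
end

section
/- Let n ≥ 7. The assignment σ_i ↦ (i, n+i+1, n+i, i+1) (a 4-cycle in Sym_{2n}), for 1 ≤ i ≤ n−1, induces a well-defined group homomorphism ρ_{L1} : B_n → Sym_{2n}, and ρ_{L1} is transitive. -/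
/-- The transposition `(j, n+j)` (0-based) in `Sym_{2n}`. -/
def tw (n : ℕ) (j : Fin n) : Equiv.Perm (Fin (2 * n)) :=
  Equiv.swap ⟨j, by have := j.isLt; omega⟩ ⟨n + j, by have := j.isLt; omega⟩

/-- The 4-cycle `(a, b, c, d)` sending `a ↦ b ↦ c ↦ d ↦ a` (for pairwise distinct
points), written as the product of transpositions `(a d)(a c)(a b)`. -/
def cyc4 {m : ℕ} (a b c d : Fin m) : Equiv.Perm (Fin m) :=
  Equiv.swap a d * Equiv.swap a c * Equiv.swap a b

/-- `ρ_{L1}(σ_{i+1})`: the 4-cycle `(i, n+i+1, n+i, i+1)` on the 0-based points of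
`Sym_{2n}`, for `i : Fin (n-1)`. -/
def linL1Gen (n : ℕ) (i : Fin (n - 1)) : Equiv.Perm (Fin (2 * n)) :=
  cyc4 ⟨i, by have := i.isLt; omega⟩ ⟨n + i + 1, by have := i.isLt; omega⟩
    ⟨n + i, by have := i.isLt; omega⟩ ⟨(i : ℕ) + 1, by have := i.isLt; omega⟩

/-- The product `∏_{j < i} (j, n+j)` (0-based) in `Sym_{2n}`. -/
def lowTw (n : ℕ) (i : Fin (n - 1)) : Equiv.Perm (Fin (2 * n)) :=
  ((List.finRange n).map (fun j : Fin n => if (j : ℕ) < (i : ℕ) then tw n j else 1)).prod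

/-- The product `∏_{j ≥ i+2} (j, n+j)` (0-based) in `Sym_{2n}`. -/
def highTw (n : ℕ) (i : Fin (n - 1)) : Equiv.Perm (Fin (2 * n)) :=
  ((List.finRange n).map (fun j : Fin n => if (i : ℕ) + 2 ≤ (j : ℕ) then tw n j else 1)).prod

/-- `ρ_{L2}(σ_{i+1}) = ∏_{j<i}(j, n+j) · (i, n+i+1, n+i, i+1) · ∏_{j≥i+2}(j, n+j)`
(0-based) in `Sym_{2n}`. -/
def linL2Gen (n : ℕ) (i : Fin (n - 1)) : Equiv.Perm (Fin (2 * n)) :=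
  lowTw n i * linL1Gen n i * highTw n i

/-- `ρ_{L3}(σ_{i+1}) = ∏_{j<i}(j, n+j) · (i, n+i+1)(i+1, n+i) · ∏_{j≥i+2}(j, n+j)`
(0-based) in `Sym_{2n}`. -/
def linL3Gen (n : ℕ) (i : Fin (n - 1)) : Equiv.Perm (Fin (2 * n)) :=
  lowTw n i *
    (Equiv.swap ⟨i, by have := i.isLt; omega⟩ ⟨n + i + 1, by have := i.isLt; omega⟩ *
     Equiv.swap ⟨(i : ℕ) + 1, by have := i.isLt; omega⟩ ⟨n + i, by have := i.isLt; omega⟩) *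
  highTw n i

/-! Conjugating a 4-cycle by `g` applies `g` to its points. Generators that are not neighbours
move disjoint sets of points and hence commute. For neighbours `s`, `t`, the product `s * t` carries
the cycle of `s` to that of `t`, so `(s * t) * s = t * (s * t)`. For transitivity, every nonzero
point is moved to a smaller one by some generator, so every orbit contains `0`. -/

namespace BraidGroup

variable {n : ℕ} {G : Type*} [Group G] {f : Fin (n - 1) → G}

theorem freeGroupLift_eq_one_of_mem_braidRels
    (hcomm : ∀ i j : Fin (n - 1), (i : ℕ) + 2 ≤ j → Commute (f i) (f j))
    (hbraid : ∀ i j : Fin (n - 1), (j : ℕ) = i + 1 → f i * f j * f i = f j * f i * f j) :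
    ∀ r ∈ braidRels n, FreeGroup.lift f r = 1 := by
  rintro r (⟨i, j, hij | hji, rfl⟩ | ⟨i, j, hij, rfl⟩) <;>
    simp only [map_mul, map_inv, FreeGroup.lift_apply_of, mul_inv_eq_one]
  · exact hcomm i j hij
  · exact (hcomm j i hji).symm
  · exact hbraid i j hij

/-- The universal property of the Artin presentation: the homomorphism out of the braid group
determined by a family satisfying the braid relations. -/
def lift (hcomm : ∀ i j : Fin (n - 1), (i : ℕ) + 2 ≤ j → Commute (f i) (f j))
    (hbraid : ∀ i j : Fin (n - 1), (j : ℕ) = i + 1 → f i * f j * f i = f j * f i * f j) :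
    BraidGroup n →* G :=
  PresentedGroup.toGroup (freeGroupLift_eq_one_of_mem_braidRels hcomm hbraid)

theorem lift_σ (hcomm : ∀ i j : Fin (n - 1), (i : ℕ) + 2 ≤ j → Commute (f i) (f j))
    (hbraid : ∀ i j : Fin (n - 1), (j : ℕ) = i + 1 → f i * f j * f i = f j * f i * f j)
    (i : Fin (n - 1)) : lift hcomm hbraid (σ i) = f i :=
  PresentedGroup.toGroup.of _

end BraidGroup

theorem isTransitiveHom_of_forall_exists_apply_lt {G : Type*} [Group G] {k : ℕ}
    {φ : G →* Equiv.Perm (Fin k)} (h : ∀ x : Fin k, (x : ℕ) ≠ 0 → ∃ g, φ g x < x) :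
    IsTransitiveHom φ := by
  have exists_apply_eq_zero (x : Fin k) : ∃ g, (φ g x : ℕ) = 0 := by
    induction x using WellFoundedLT.induction with
    | _ x ih =>
      by_cases hx : (x : ℕ) = 0
      · exact ⟨1, by rwa [map_one, Equiv.Perm.one_apply]⟩
      · obtain ⟨g, hg⟩ := h x hx
        obtain ⟨g', hg'⟩ := ih _ hg
        exact ⟨g' * g, by rwa [map_mul, Equiv.Perm.mul_apply]⟩
  intro x y
  obtain ⟨g, hg⟩ := exists_apply_eq_zero x
  obtain ⟨g', hg'⟩ := exists_apply_eq_zero y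
  have hgg' : φ g x = φ g' y := Fin.ext (hg.trans hg'.symm)
  exact ⟨g'⁻¹ * g, by rw [map_mul, map_inv, Equiv.Perm.mul_apply, Equiv.Perm.inv_eq_iff_eq, hgg']⟩

section FourCycle

variable {m : ℕ} {a b c d : Fin m}

theorem cyc4_apply_first (h : [a, b, c, d].Nodup) : cyc4 a b c d a = b := by
  grind [cyc4, Equiv.Perm.mul_apply]

theorem cyc4_apply_second (h : [a, b, c, d].Nodup) : cyc4 a b c d b = c := by
  grind [cyc4, Equiv.Perm.mul_apply]

theorem cyc4_apply_third (h : [a, b, c, d].Nodup) : cyc4 a b c d c = d := by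
  grind [cyc4, Equiv.Perm.mul_apply]

theorem cyc4_apply_fourth (h : [a, b, c, d].Nodup) : cyc4 a b c d d = a := by
  grind [cyc4, Equiv.Perm.mul_apply]

theorem cyc4_apply_of_notMem {x : Fin m} (hx : x ∉ [a, b, c, d]) : cyc4 a b c d x = x := by
  simp_all [cyc4, Equiv.swap_apply_of_ne_of_ne]

theorem mul_cyc4_eq_cyc4_mul (g : Equiv.Perm (Fin m)) (a b c d : Fin m) :
    g * cyc4 a b c d = cyc4 (g a) (g b) (g c) (g d) * g := by
  ext x : 1
  simp only [cyc4, Equiv.Perm.mul_apply, g.injective.map_swap]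

theorem cyc4_rotate (h : [a, b, c, d].Nodup) : cyc4 b c d a = cyc4 a b c d := by
  have hconj := mul_cyc4_eq_cyc4_mul (cyc4 a b c d) a b c d
  rw [cyc4_apply_first h, cyc4_apply_second h, cyc4_apply_third h, cyc4_apply_fourth h] at hconj
  exact (mul_right_cancel hconj).symm

theorem commute_cyc4_of_disjoint {a' b' c' d' : Fin m}
    (h : [a, b, c, d].Disjoint [a', b', c', d']) :
    Commute (cyc4 a b c d) (cyc4 a' b' c' d') := by
  refine Equiv.Perm.Disjoint.commute fun x ↦ ?_
  by_cases hx : x ∈ [a, b, c, d]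
  · exact .inr (cyc4_apply_of_notMem (h hx))
  · exact .inl (cyc4_apply_of_notMem hx)

theorem cyc4_braid {a' b' c' : Fin m} (h : [a, b, c, a', b', c'].Nodup) :
    cyc4 a b' a' b * cyc4 b c' b' c * cyc4 a b' a' b =
      cyc4 b c' b' c * cyc4 a b' a' b * cyc4 b c' b' c := by
  have ha : a ∉ [b, c', b', c] := by simp_all
  have ha' : a' ∉ [b, c', b', c] := by simp_all [eq_comm]
  have hc : c ∉ [a, b', a', b] := by simp_all [eq_comm]
  have hc' : c' ∉ [a, b', a', b] := by simp_all [eq_comm]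
  have hs : [a, b', a', b].Nodup := by grind
  have ht : [b, c', b', c].Nodup := by grind
  set s := cyc4 a b' a' b
  set t := cyc4 b c' b' c
  have hst_a : (s * t) a = b' :=
    (congrArg s (cyc4_apply_of_notMem ha)).trans (cyc4_apply_first hs)
  have hst_b' : (s * t) b' = c :=
    (congrArg s (cyc4_apply_third ht)).trans (cyc4_apply_of_notMem hc)
  have hst_a' : (s * t) a' = b :=
    (congrArg s (cyc4_apply_of_notMem ha')).trans (cyc4_apply_third hs)
  have hst_b : (s * t) b = c' :=
    (congrArg s (cyc4_apply_first ht)).trans (cyc4_apply_of_notMem hc')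
  have ht_rotate : cyc4 b' c b c' = t := (cyc4_rotate (by grind)).trans (cyc4_rotate ht)
  calc s * t * s = cyc4 b' c b c' * (s * t) := by
        rw [mul_cyc4_eq_cyc4_mul, hst_a, hst_b', hst_a', hst_b]
    _ = t * (s * t) := by rw [ht_rotate]
    _ = t * s * t := (mul_assoc t s t).symm

end FourCycle

section LinL1

variable {n : ℕ} {i j : Fin (n - 1)} {x : Fin (2 * n)}

theorem linL1Gen_commute (hij : (i : ℕ) + 2 ≤ j) : Commute (linL1Gen n i) (linL1Gen n j) := by
  apply commute_cyc4_of_disjoint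
  simp only [List.disjoint_cons_right, List.disjoint_nil_right, List.mem_cons, List.not_mem_nil,
    Fin.ext_iff, or_false, and_true]
  omega

theorem linL1Gen_braid (hij : (j : ℕ) = i + 1) :
    linL1Gen n i * linL1Gen n j * linL1Gen n i = linL1Gen n j * linL1Gen n i * linL1Gen n j := by
  rw [show j = ⟨i + 1, hij ▸ j.isLt⟩ from Fin.ext hij]
  apply cyc4_braid
  simp only [List.nodup_cons, List.mem_cons, List.not_mem_nil, List.nodup_nil, Fin.ext_iff,
    or_false, not_false_eq_true, and_true]
  omega

variable (i) in
theorem linL1Gen_points_nodup :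
    [(⟨i, by omega⟩ : Fin (2 * n)), ⟨n + i + 1, by omega⟩, ⟨n + i, by omega⟩,
      ⟨i + 1, by omega⟩].Nodup := by
  have := i.isLt
  simp only [List.nodup_cons, List.mem_cons, List.not_mem_nil, List.nodup_nil, Fin.ext_iff,
    or_false, not_false_eq_true, and_true]
  omega

theorem linL1Gen_apply_of_eq_add_one (hx : (x : ℕ) = i + 1) : (linL1Gen n i x : ℕ) = i := by
  rw [show x = ⟨i + 1, by omega⟩ from Fin.ext hx]
  exact congrArg Fin.val (cyc4_apply_fourth (linL1Gen_points_nodup i))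

theorem linL1Gen_apply_of_eq_n_add (hx : (x : ℕ) = n + i) : (linL1Gen n i x : ℕ) = i + 1 := by
  rw [show x = ⟨n + i, by omega⟩ from Fin.ext hx]
  exact congrArg Fin.val (cyc4_apply_third (linL1Gen_points_nodup i))

theorem linL1Gen_apply_of_eq_n_add_add_one (hx : (x : ℕ) = n + i + 1) :
    (linL1Gen n i x : ℕ) = n + i := by
  rw [show x = ⟨n + i + 1, by omega⟩ from Fin.ext hx]
  exact congrArg Fin.val (cyc4_apply_second (linL1Gen_points_nodup i))

theorem exists_linL1Gen_apply_lt (hn : 2 ≤ n) (hx : (x : ℕ) ≠ 0) :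
    ∃ i : Fin (n - 1), linL1Gen n i x < x := by
  simp only [Fin.lt_def]
  rcases lt_trichotomy (x : ℕ) n with hlt | heq | hgt
  · refine ⟨⟨x - 1, by omega⟩, ?_⟩
    rw [linL1Gen_apply_of_eq_add_one (by grind)]
    grind
  · refine ⟨⟨0, by omega⟩, ?_⟩
    rw [linL1Gen_apply_of_eq_n_add (by grind)]
    grind
  · refine ⟨⟨x - n - 1, by omega⟩, ?_⟩
    rw [linL1Gen_apply_of_eq_n_add_add_one (by grind)]
    grind

variable (n) in
/-- The homomorphism `ρ_{L1}`, defined for every `n`. -/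
def linL1 : BraidGroup n →* Equiv.Perm (Fin (2 * n)) :=
  BraidGroup.lift (f := linL1Gen n) (fun _ _ ↦ linL1Gen_commute) fun _ _ ↦ linL1Gen_braid

variable (i) in
theorem linL1_σ : linL1 n (σ i) = linL1Gen n i :=
  BraidGroup.lift_σ _ _ i

theorem isTransitiveHom_linL1 (hn : 2 ≤ n) : IsTransitiveHom (linL1 n) := by
  refine isTransitiveHom_of_forall_exists_apply_lt fun x hx ↦ ?_
  obtain ⟨i, hi⟩ := exists_linL1Gen_apply_lt hn hx
  exact ⟨σ i, by rwa [linL1_σ]⟩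

end LinL1

theorem linL1_exists_and_transitive_general (n : ℕ) (hn : 2 ≤ n) :
    ∃ ρL1 : BraidGroup n →* Equiv.Perm (Fin (2 * n)),
      (∀ i : Fin (n - 1), ρL1 (σ i) = linL1Gen n i) ∧ IsTransitiveHom ρL1 :=
  ⟨linL1 n, linL1_σ, isTransitiveHom_linL1 hn⟩

/-- Lin. For `n ≥ 7`, the assignment
`σ_i ↦ (i, n+i+1, n+i, i+1)` induces a well-defined group homomorphism
`ρ_{L1} : B_n → Sym_{2n}`, and `ρ_{L1}` is transitive. -/
theorem linL1_exists_and_transitive (n : ℕ) (hn : 7 ≤ n) :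
    ∃ ρL1 : BraidGroup n →* Equiv.Perm (Fin (2 * n)),
      (∀ i : Fin (n - 1), ρL1 (σ i) = linL1Gen n i) ∧ IsTransitiveHom ρL1 := by
  exact linL1_exists_and_transitive_general n (by omega)
end

section
/- Let ρ ≥ 3 be an integer. Let G be a perfect group containing elements t_0, t_1, …, t_{2ρ+1} such that: (i) t_i t_j = t_j t_i for all 1 ≤ i, j ≤ 2ρ+1 with |i−j| ≥ 2; (ii) t_i t_{i+1} t_i = t_{i+1} t_i t_{i+1} for all 1 ≤ i ≤ 2ρ; (iii) t_0 t_i = t_i t_0 for all 1 ≤ i ≤ 2ρ+1 with i ≠ 4; (iv) t_0 t_4 t_0 = t_4 t_0 t_4; (v) G is generated by t_0, t_1, …, t_{2ρ}. If H is any group and φ : G → H is a homomorphism with φ(t_1) = φ(t_2) = … = φ(t_{2ρ+1}), then φ is trivial. -/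
/-!
The element `t 0` commutes with `t 1` and satisfies the braid relation with `t 4`. If `φ` identifies
`t 1` and `t 4`, then `φ (t 0)` both commutes and braids with their common image, which forces
it to equal that image. So all the generators have the same image, the image of `φ` is cyclic,
and a perfect group has no nontrivial cyclic image.
-/

lemma eq_of_commute_of_braid {M : Type*} [Mul M] [IsLeftCancelMul M] {a b : M}
    (hcomm : Commute a b) (hbraid : a * b * a = b * a * b) : a = b :=
  mul_left_cancel (hbraid.trans (congrArg (· * b) hcomm.eq.symm))

section

variable {G H : Type*} [Group G] [Group H]

lemma range_le_of_closure_eq_top {S : Set G} (hS : Subgroup.closure S = ⊤) {φ : G →* H}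
    {K : Subgroup H} (hφ : ∀ s ∈ S, φ s ∈ K) : φ.range ≤ K := by
  rw [MonoidHom.range_eq_map, ← hS, Subgroup.map_le_iff_le_comap, Subgroup.closure_le]
  exact hφ

lemma eq_one_of_isPerfect_of_isSolvable_range [Group.IsPerfect G] {φ : G →* H}
    [Group.IsSolvable φ.range] : φ = 1 := by
  have : Group.IsPerfect φ.range := Group.IsPerfect.range φ
  by_contra hne
  have : Nontrivial φ.range :=
    (Subgroup.nontrivial_iff_ne_bot _).mpr (mt MonoidHom.range_eq_bot_iff.mp hne)
  exact Group.IsPerfect.not_isSolvable φ.range inferInstance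

open scoped IsMulCommutative in
theorem mcg_cyclic_hom_trivial_general [Group.IsPerfect G] {S : Set G}
    (hS : Subgroup.closure S = ⊤) {a b c : G} (hcomm : Commute a b)
    (hbraid : a * c * a = c * a * c) {φ : G →* H} (hφc : φ c = φ b)
    (hφS : ∀ s ∈ S, s ≠ a → φ s = φ b) : φ = 1 := by
  have hφa : φ a = φ b := by
    refine eq_of_commute_of_braid (hcomm.map φ) ?_
    simpa only [map_mul, hφc] using congrArg φ hbraid
  have hrange : φ.range ≤ Subgroup.zpowers (φ b) := by
    refine range_le_of_closure_eq_top hS fun s hs ↦ ?_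
    have hφs : φ s = φ b := by
      obtain rfl | hsa := eq_or_ne s a
      exacts [hφa, hφS s hs hsa]
    exact hφs ▸ Subgroup.mem_zpowers (φ s)
  have : IsCyclic φ.range := Subgroup.isCyclic_of_le hrange
  exact eq_one_of_isPerfect_of_isSolvable_range

end

/-- Case 1 of the proof of Theorem 1. Let `ρ ≥ 3` and let `G` be a
perfect group containing elements `t 0, …, t (2ρ+1)` satisfying the braid/commutation
relations of the Humphries–Dehn twist generators of the mapping class group, and
generated by `t 0, …, t (2ρ)`. If `H` is any group and `φ : G → H` is a homomorphism
with `φ (t 1) = φ (t 2) = ⋯ = φ (t (2ρ+1))`, then `φ` is trivial. -/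
theorem mcg_cyclic_hom_trivial (ρ : ℕ) (hρ : 3 ≤ ρ) (G : Type*) [Group G] (t : ℕ → G)
    (hperfect : commutator G = ⊤)
    (hcomm : ∀ i j : ℕ, 1 ≤ i → i ≤ 2 * ρ + 1 → 1 ≤ j → j ≤ 2 * ρ + 1 →
      (i + 2 ≤ j ∨ j + 2 ≤ i) → t i * t j = t j * t i)
    (hbraid : ∀ i : ℕ, 1 ≤ i → i ≤ 2 * ρ →
      t i * t (i + 1) * t i = t (i + 1) * t i * t (i + 1))
    (hcomm0 : ∀ i : ℕ, 1 ≤ i → i ≤ 2 * ρ + 1 → i ≠ 4 → t 0 * t i = t i * t 0)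
    (hbraid0 : t 0 * t 4 * t 0 = t 4 * t 0 * t 4)
    (hgen : Subgroup.closure (t '' {i : ℕ | i ≤ 2 * ρ}) = ⊤)
    (H : Type*) [Group H] (φ : G →* H)
    (hcyc : ∀ i : ℕ, 1 ≤ i → i ≤ 2 * ρ + 1 → φ (t i) = φ (t 1)) :
    ∀ g : G, φ g = 1 := by
  have : Group.IsPerfect G := ⟨hperfect⟩
  have hcyc' : ∀ s ∈ t '' {i | i ≤ 2 * ρ}, s ≠ t 0 → φ s = φ (t 1) := by
    rintro _ ⟨i, hi : i ≤ 2 * ρ, rfl⟩ hne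
    exact hcyc i (Nat.pos_of_ne_zero fun h ↦ hne (congrArg t h)) (by lia)
  exact DFunLike.congr_fun <| mcg_cyclic_hom_trivial_general hgen
    (hcomm0 1 le_rfl (by lia) (by lia)) hbraid0 (hcyc 4 (by lia) (by lia)) hcyc'
end

section
/- Let n ≥ 7 and let w ∈ Sym_n. Define w_0 ∈ Sym_{2n} by w_0(i) = i for 1 ≤ i ≤ n and w_0(n+i) = n + w(i) for 1 ≤ i ≤ n. Then there is no permutation u_0 ∈ Sym_{2n} such that u_0 commutes with (i, i+1)·w_0 for every 1 ≤ i ≤ n−1 with i ≠ 4, and u_0 v u_0 = v u_0 v where v = (4, 5)·w_0. -/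
/-- The block-diagonal permutation of `Fin (2n)` acting as `p` on the first `n` points
and as `j ↦ n + q (j - n)` on the last `n` points. In particular `dbl n 1 w` is the
permutation `w₀` with `w₀(i) = i` for `i < n` and `w₀(n + i) = n + w(i)` (0-based). -/
def dbl (n : ℕ) (p q : Equiv.Perm (Fin n)) : Equiv.Perm (Fin (2 * n)) :=
  (finSumFinEquiv.trans (finCongr (two_mul n).symm)).permCongr (Equiv.sumCongr p q)

/-!
Since `u₀` commutes with `s * w₀` for each adjacent transposition `s` other than `(4, 5)`, it
commutes with every quotient `s * t⁻¹` of two of these, and hence preserves the set of points each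
such quotient moves. In 1-based points, `{2, 3, 4} \ {1, 2, 3} = {4}` and
`{5, 6, 7} \ {3, 4, 6, 7} = {5}` are differences of such sets, so `u₀` fixes `4` and `5`.
But `v` interchanges `4` and `5`, so `u₀ v u₀` sends `4` to `5` while `v u₀ v` fixes it.
-/

section

open Equiv

theorem commute_mul_inv_of_commute_mul_right {G : Type*} [Group G] {u a b w : G}
    (ha : Commute u (a * w)) (hb : Commute u (b * w)) : Commute u (a * b⁻¹) := by
  simpa only [mul_inv_rev, mul_assoc, mul_inv_cancel_left] using ha.mul_right hb.inv_right

open MulAction Pointwise in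
theorem smul_eq_self_of_fixedBy_sdiff_eq_singleton {G α : Type*} [Group G] [MulAction G α]
    {u g h : G} {p : α} (hg : Commute u g) (hh : Commute u h)
    (hp : fixedBy α h \ fixedBy α g = {p}) : u • p = p := by
  have hg' : u • fixedBy α g = fixedBy α g := fixedBy_mem_fixedBy_of_commute hg.symm
  have hh' : u • fixedBy α h = fixedBy α h := fixedBy_mem_fixedBy_of_commute hh.symm
  rw [← Set.singleton_eq_singleton_iff, ← Set.smul_set_singleton, ← hp, Set.smul_set_sdiff,
    hg', hh']

theorem mul_mul_ne_mul_mul_of_apply_eq_self {α : Type*} {u v : Perm α} {p q : α} (hpq : p ≠ q)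
    (hup : u p = p) (huq : u q = q) (hvp : v p = q) (hvq : v q = p) :
    u * v * u ≠ v * u * v := by
  intro h
  have hp : u (v (u p)) = v (u (v p)) := congr($h p)
  rw [hup, hvp, huq, hvq] at hp
  exact hpq hp.symm

section DecidableEq

variable {α : Type*} [DecidableEq α]

theorem swap_mul_swap_apply_ne_self_iff {p q r x : α} (hpr : p ≠ r) :
    (swap p q * swap q r) x ≠ x ↔ x = p ∨ x = q ∨ x = r := by
  grind [Perm.mul_apply]

theorem apply_eq_self_of_commute_swap_mul {u w τ : Perm α} {p q r : α}
    (hpq : p ≠ q) (hpr : p ≠ r) (hτp : τ p = p) (hτq : τ q ≠ r) (hτr : τ r ≠ q)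
    (hupq : Commute u (swap p q * w)) (huqr : Commute u (swap q r * w))
    (huτ : Commute u (τ * w)) : u p = p := by
  have hpqr : Commute u (swap p q * swap q r) := commute_mul_inv_of_commute_mul_right hupq huqr
  have hτswap : Commute u (τ * swap q r) := commute_mul_inv_of_commute_mul_right huτ huqr
  refine smul_eq_self_of_fixedBy_sdiff_eq_singleton hpqr hτswap ?_
  ext x
  rw [Set.mem_sdiff, Set.mem_singleton_iff, MulAction.mem_fixedBy, MulAction.mem_fixedBy,
    Perm.smul_def, Perm.smul_def, ← ne_eq, swap_mul_swap_apply_ne_self_iff hpr]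
  constructor
  · rintro ⟨hfix, rfl | rfl | rfl⟩
    · rfl
    · exact absurd (by simpa using hfix) hτr
    · exact absurd (by simpa using hfix) hτq
  · rintro rfl
    simp [swap_apply_of_ne_of_ne hpq hpr, hτp]

theorem case2_no_u0_general (x : Fin 7 ↪ α) {w : Perm α} (hw₃ : w (x 3) = x 3)
    (hw₄ : w (x 4) = x 4) :
    ¬ ∃ u : Perm α,
      (∀ i : Fin 6, i ≠ 3 → Commute u (swap (x i.castSucc) (x i.succ) * w)) ∧
      u * (swap (x 3) (x 4) * w) * u = (swap (x 3) (x 4) * w) * u * (swap (x 3) (x 4) * w) := by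
  rintro ⟨u, hu, hbraid⟩
  have h01 : Commute u (swap (x 0) (x 1) * w) := hu 0 (by decide)
  have h21 : Commute u (swap (x 2) (x 1) * w) := swap_comm (x 1) (x 2) ▸ hu 1 (by decide)
  have h32 : Commute u (swap (x 3) (x 2) * w) := swap_comm (x 2) (x 3) ▸ hu 2 (by decide)
  have h23 : Commute u (swap (x 2) (x 3) * w) := hu 2 (by decide)
  have h45 : Commute u (swap (x 4) (x 5) * w) := hu 4 (by decide)
  have h56 : Commute u (swap (x 5) (x 6) * w) := hu 5 (by decide)
  have hu₃ : u (x 3) = x 3 := by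
    refine apply_eq_self_of_commute_swap_mul ?_ ?_ ?_ ?_ ?_ h32 h21 h01 <;>
      simp [swap_apply_def]
  have hu₄ : u (x 4) = x 4 := by
    refine apply_eq_self_of_commute_swap_mul ?_ ?_ ?_ ?_ ?_ h45 h56 h23 <;>
      simp [swap_apply_def]
  exact mul_mul_ne_mul_mul_of_apply_eq_self (x.injective.ne (by decide)) hu₃ hu₄
    (by simp [hw₃]) (by simp [hw₄]) hbraid

end DecidableEq

theorem dbl_castLE {n : ℕ} (p q : Perm (Fin n)) (h : n ≤ 2 * n) (i : Fin n) :
    dbl n p q (i.castLE h) = (p i).castLE h := by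
  have hinl (j : Fin n) :
      j.castLE h = finSumFinEquiv.trans (finCongr (two_mul n).symm) (Sum.inl j) := by
    ext; simp
  rw [dbl, hinl, hinl, permCongr_apply, symm_apply_apply, sumCongr_apply, Sum.map_inl]

end

/-- Case 2 of the proof of Theorem 1. Let `n ≥ 7`, `w ∈ Sym_n`, and
let `w₀ ∈ Sym_{2n}` be `w₀(i) = i` for `1 ≤ i ≤ n`, `w₀(n+i) = n + w(i)` (1-based; here
realized 0-based as `dbl n 1 w`). Then there is no `u₀ ∈ Sym_{2n}` commuting with
`(i, i+1)·w₀` for every `1 ≤ i ≤ n-1` with `i ≠ 4` and satisfying `u₀ v u₀ = v u₀ v`,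
where `v = (4, 5)·w₀` (1-based points; 0-based these are `(i-1, i)` and `(3, 4)`). -/
theorem case2_no_u0 (n : ℕ) (hn : 7 ≤ n) (w : Equiv.Perm (Fin n)) :
    ¬ ∃ u0 : Equiv.Perm (Fin (2 * n)),
      (∀ (i : ℕ) (_h1 : 1 ≤ i) (_h2 : i ≤ n - 1), i ≠ 4 →
        Commute u0
          (Equiv.swap (⟨i - 1, by omega⟩ : Fin (2 * n)) ⟨i, by omega⟩ * dbl n 1 w)) ∧
      u0 * (Equiv.swap (⟨3, by omega⟩ : Fin (2 * n)) ⟨4, by omega⟩ * dbl n 1 w) * u0 =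
        (Equiv.swap (⟨3, by omega⟩ : Fin (2 * n)) ⟨4, by omega⟩ * dbl n 1 w) * u0 *
          (Equiv.swap (⟨3, by omega⟩ : Fin (2 * n)) ⟨4, by omega⟩ * dbl n 1 w) := by
  rintro ⟨u, hu, hbraid⟩
  exact case2_no_u0_general (Fin.castLEEmb (by omega))
    (dbl_castLE 1 w (by omega) ⟨3, by omega⟩) (dbl_castLE 1 w (by omega) ⟨4, by omega⟩)
    ⟨u, fun i hi => hu (i + 1) (by omega) (by omega) (by omega), hbraid⟩
end

section
/- Let n ≥ 7. For 1 ≤ i ≤ n−1 define v_i = ∏_{j=1}^{i−1}(j, n+j) · (i, n+i+1)(i+1, n+i) · ∏_{j=i+2}^{n}(j, n+j) ∈ Sym_{2n}. If u_0 ∈ Sym_{2n} is a product of n transpositions with pairwise disjoint supports and u_0 commutes with v_i for every 1 ≤ i ≤ n−1 with i ≠ 4, then u_0 = ∏_{j=1}^{n}(j, n+j). -/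
/-- `u` is a product of `n` transpositions with pairwise disjoint supports. -/
def IsProdOfDisjointTranspositions (n : ℕ) (u : Equiv.Perm (Fin (2 * n))) : Prop :=
  ∃ a b : Fin n → Fin (2 * n),
    Function.Injective a ∧ Function.Injective b ∧ (∀ j k : Fin n, a j ≠ b k) ∧
    u = ((List.finRange n).map (fun j : Fin n => Equiv.swap (a j) (b j))).prod

/-!
Identify the `2n` points with `Fin 2 × Fin n`, a point over the letter `j` being `j` or `n + j`.
Then `v_i` exchanges the two copies of the letters while applying the adjacent transposition
`s_i` to the letters, so a product `v_i v_j` acts on the letters only, as `s_i s_j`.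

A permutation `u` commuting with `v_i` and `v_j` preserves the fixed points of `v_i v_j`. If every
letter `d ≠ c` is moved by some such product that fixes `c`, then `u` preserves the fibre over `c`
and, having no fixed points, exchanges its two points. Conjugation by `v_i` carries this property
from `c` to `s_i c`. When the generator of index `k` is missing, the letters fall into the blocks
`{0, …, k}` and `{k + 1, …, n - 1}`; it is enough to treat `c = 0` and `c = k + 1`, and products
`v_i v_j` with `i` and `j` from different blocks separate such a `c` from all other letters.
-/

open Equiv Equiv.Perm

section Twist

variable {α : Type*}

/-- The permutation of two copies of `α` which exchanges the copies while applying `σ`. The Lin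
generator `v_i` is of this form for `σ` an adjacent transposition, and `∏ j, (j, n+j)` is the case
`σ = 1`. -/
def twist (σ : Perm α) : Perm (Fin 2 × α) :=
  Fin.revPerm.prodCongr σ

@[simp]
theorem twist_apply (σ : Perm α) (x : Fin 2 × α) : twist σ x = (x.1.rev, σ x.2) :=
  rfl

theorem twist_mul_twist_apply_eq_self_iff {σ τ : Perm α} {x : Fin 2 × α} :
    (twist σ * twist τ) x = x ↔ (σ * τ) x.2 = x.2 := by
  simp [Prod.ext_iff]

/-- `u` exchanges the two points over the letter `c`. -/
def FlipsFiber (u : Perm (Fin 2 × α)) (c : α) : Prop :=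
  ∀ ε, u (ε, c) = (ε.rev, c)

variable {u : Perm (Fin 2 × α)} {σ τ : Perm α} {c : α}

theorem eq_twist_one_of_forall_flipsFiber (h : ∀ c, FlipsFiber u c) : u = twist 1 :=
  Equiv.ext fun x => h x.2 x.1

theorem FlipsFiber.apply_of_commute (h : FlipsFiber u c) (hσ : Commute u (twist σ)) :
    FlipsFiber u (σ c) := fun ε => by
  simpa [h ε.rev] using DFunLike.congr_fun hσ.eq (ε.rev, c)

theorem mul_apply_snd_eq_self_of_commute (hσ : Commute u (twist σ)) (hτ : Commute u (twist τ))
    {x : Fin 2 × α} (hx : (σ * τ) x.2 = x.2) : (σ * τ) (u x).2 = (u x).2 := by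
  rw [← twist_mul_twist_apply_eq_self_iff] at hx ⊢
  rw [← Perm.mul_apply, ← (hσ.mul_right hτ).eq, Perm.mul_apply, hx]

theorem flipsFiber_of_forall_exists_disjoint (hu : ∀ x, u x ≠ x)
    (hsep : ∀ d, d ≠ c → ∃ σ τ : Perm α, Commute u (twist σ) ∧ Commute u (twist τ) ∧
      σ.Disjoint τ ∧ σ c = c ∧ τ c = c ∧ σ d ≠ d) :
    FlipsFiber u c := fun ε => by
  have snd_eq : (u (ε, c)).2 = c := by
    by_contra hd
    obtain ⟨σ, τ, hσ, hτ, hdisj, hσc, hτc, hσd⟩ := hsep _ hd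
    have hc : (σ * τ) c = c := hdisj.mul_apply_eq_iff.2 ⟨hσc, hτc⟩
    exact hσd (hdisj.mul_apply_eq_iff.1 (mul_apply_snd_eq_self_of_commute hσ hτ hc)).1
  have fst_ne : (u (ε, c)).1 ≠ ε := fun h => hu (ε, c) (Prod.ext h snd_eq)
  exact Prod.ext (by grind) snd_eq

theorem swap_swap_cross_apply [DecidableEq α] {a b : α} (hab : a ≠ b) (x : Fin 2 × α) :
    swap (0, a) (1, b) (swap (0, b) (1, a) x) =
      (if x.2 = a ∨ x.2 = b then x.1.rev else x.1, swap a b x.2) := by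
  obtain ⟨ε, c⟩ := x
  rcases eq_or_ne c a with rfl | hca
  · fin_cases ε <;> simp [swap_apply_def, hab, hab.symm]
  rcases eq_or_ne c b with rfl | hcb
  · fin_cases ε <;> simp [swap_apply_def, hca, hca.symm]
  · simp [swap_apply_of_ne_of_ne, hca, hcb]

end Twist

section AdjSwap

variable {n : ℕ}

/-- The adjacent transposition of the letters `i` and `i + 1`, i.e. the image of the `i`-th braid
generator in the symmetric group. -/
def adjSwap (i : Fin (n - 1)) : Perm (Fin n) :=
  swap ⟨i, by omega⟩ ⟨i + 1, by omega⟩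

theorem adjSwap_apply_eq_self_iff {i : Fin (n - 1)} {c : Fin n} :
    adjSwap i c = c ↔ (c : ℕ) ≠ i ∧ (c : ℕ) ≠ i + 1 := by
  rw [← not_iff_not, ← ne_eq, adjSwap, swap_apply_ne_self_iff]
  simp only [ne_eq, Fin.ext_iff]
  omega

theorem disjoint_adjSwap {i j : Fin (n - 1)} (h : (i : ℕ) + 2 ≤ j ∨ (j : ℕ) + 2 ≤ i) :
    (adjSwap i).Disjoint (adjSwap j) := fun c => by
  simp only [adjSwap_apply_eq_self_iff]
  omega

theorem exists_disjoint_adjSwap {k : ℕ} (hk : 2 ≤ k) (hkn : k + 4 ≤ n) {c d : Fin n}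
    (hc : (c : ℕ) = 0 ∨ (c : ℕ) = k + 1) (hd : d ≠ c) :
    ∃ i j : Fin (n - 1), (i : ℕ) ≠ k ∧ (j : ℕ) ≠ k ∧ (adjSwap i).Disjoint (adjSwap j) ∧
      adjSwap i c = c ∧ adjSwap j c = c ∧ adjSwap i d ≠ d := by
  suffices ∃ i j, i < n - 1 ∧ j < n - 1 ∧ i ≠ k ∧ j ≠ k ∧ (i + 2 ≤ j ∨ j + 2 ≤ i) ∧
      ((c : ℕ) ≠ i ∧ (c : ℕ) ≠ i + 1) ∧ ((c : ℕ) ≠ j ∧ (c : ℕ) ≠ j + 1) ∧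
      ((d : ℕ) = i ∨ (d : ℕ) = i + 1) by
    obtain ⟨i, j, hi, hj, hik, hjk, hij, hic, hjc, hid⟩ := this
    refine ⟨⟨i, hi⟩, ⟨j, hj⟩, hik, hjk, disjoint_adjSwap hij, adjSwap_apply_eq_self_iff.2 hic,
      adjSwap_apply_eq_self_iff.2 hjc, fun h => ?_⟩
    exact hid.elim (adjSwap_apply_eq_self_iff.1 h).1 (adjSwap_apply_eq_self_iff.1 h).2
  have hdc : (d : ℕ) ≠ c := Fin.val_ne_of_ne hd
  rcases hc with hc | hc <;> rcases le_or_gt (d : ℕ) k with hdk | hdk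
  · exact ⟨max (d - 1) 1, k + 1, by omega⟩
  · exact ⟨min d (n - 2), 1, by omega⟩
  · exact ⟨min d (k - 1), k + 2, by omega⟩
  · exact ⟨max (d - 1) (k + 2), 0, by omega⟩

theorem eq_twist_one_of_commute_twist_adjSwap {k : ℕ} (hk : 2 ≤ k) (hkn : k + 4 ≤ n)
    {u : Perm (Fin 2 × Fin n)} (hu : ∀ x, u x ≠ x)
    (hcomm : ∀ i : Fin (n - 1), (i : ℕ) ≠ k → Commute u (twist (adjSwap i))) :
    u = twist 1 := by
  have block_start : ∀ c : Fin n, (c : ℕ) = 0 ∨ (c : ℕ) = k + 1 → FlipsFiber u c := fun c hc =>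
    flipsFiber_of_forall_exists_disjoint hu fun d hd =>
      let ⟨i, j, hi, hj, hsep⟩ := exists_disjoint_adjSwap hk hkn hc hd
      ⟨adjSwap i, adjSwap j, hcomm i hi, hcomm j hj, hsep⟩
  refine eq_twist_one_of_forall_flipsFiber fun ⟨c, hc⟩ => ?_
  induction c with
  | zero => exact block_start _ (.inl rfl)
  | succ c ih =>
    rcases eq_or_ne c k with rfl | hck
    · exact block_start _ (.inr rfl)
    · have := (ih (by omega)).apply_of_commute (hcomm ⟨c, by omega⟩ hck)
      rwa [adjSwap, swap_apply_left] at this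

end AdjSwap

section DisjointProduct

variable {ι β : Type*}

theorem list_prod_map_apply_of_forall_ne {l : List ι} (hl : l.Nodup) {f : ι → Perm β} {j : ι}
    (hj : j ∈ l) {x : β} (hx : ∀ k, k ≠ j → f k x = x)
    (hfx : ∀ k, k ≠ j → f k (f j x) = f j x) : (l.map f).prod x = f j x := by
  have fixed : ∀ l : List ι, j ∉ l → (l.map f).prod x = x := fun l hjl => by
    induction l with
    | nil => rfl
    | cons k l ih =>
      simp only [List.mem_cons, not_or] at hjl
      rw [List.map_cons, List.prod_cons, Perm.mul_apply, ih hjl.2, hx k (Ne.symm hjl.1)]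
  induction l with
  | nil => simp at hj
  | cons k l ih =>
    rw [List.nodup_cons] at hl
    rw [List.map_cons, List.prod_cons, Perm.mul_apply]
    rcases eq_or_ne k j with rfl | hkj
    · rw [fixed l hl.1]
    · rw [ih hl.2 (List.mem_of_ne_of_mem hkj.symm hj), hfx k hkj]

end DisjointProduct

section LinGenerators

variable {n : ℕ}

theorem IsProdOfDisjointTranspositions.apply_ne_self {u : Perm (Fin (2 * n))}
    (hu : IsProdOfDisjointTranspositions n u) (x : Fin (2 * n)) : u x ≠ x := by
  obtain ⟨a, b, ha, hb, hab, rfl⟩ := hu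
  have bijective : Function.Bijective (Sum.elim a b) :=
    (Fintype.bijective_iff_injective_and_card _).2 ⟨ha.sumElim hb hab, by simp [two_mul]⟩
  have pairwise_disjoint :
      ((List.finRange n).map fun j => swap (a j) (b j)).Pairwise Perm.Disjoint := by
    refine List.pairwise_map.2 ((List.nodup_finRange n).imp fun {j k} hjk => ?_)
    exact disjoint_swap_swap (by simp [hab, (hab _ _).symm, ha.ne hjk, hb.ne hjk])
  have moved : ∃ j, swap (a j) (b j) x ≠ x := by
    obtain ⟨j | j, rfl⟩ := bijective.surjective x
    · exact ⟨j, by simp [(hab j j).symm]⟩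
    · exact ⟨j, by simp [hab j j]⟩
  obtain ⟨j, hj⟩ := moved
  rwa [← eq_on_support_mem_disjoint (List.mem_map_of_mem (List.mem_finRange j))
    pairwise_disjoint x (mem_support.2 hj)]

theorem tw_eq_swap (k : Fin n) :
    tw n k = swap (finProdFinEquiv (0, k)) (finProdFinEquiv (1, k)) :=
  congrArg₂ swap (by simp [Fin.ext_iff]) (by simp [Fin.ext_iff, add_comm])

theorem tw_apply (k : Fin n) (x : Fin 2 × Fin n) :
    tw n k (finProdFinEquiv x) = finProdFinEquiv (if x.2 = k then x.1.rev else x.1, x.2) := by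
  obtain ⟨ε, j⟩ := x
  rw [tw_eq_swap, ← finProdFinEquiv.injective.map_swap]
  fin_cases ε <;> by_cases hjk : j = k <;> simp [swap_apply_def, hjk]

theorem prod_tw_ite_apply (p : Fin n → Prop) [DecidablePred p] (x : Fin 2 × Fin n) :
    ((List.finRange n).map fun k => if p k then tw n k else 1).prod (finProdFinEquiv x) =
      finProdFinEquiv (if p x.2 then x.1.rev else x.1, x.2) := by
  have factor_apply (k : Fin n) (y : Fin 2 × Fin n) :
      (if p k then tw n k else 1) (finProdFinEquiv y) =
        finProdFinEquiv (if p k ∧ y.2 = k then y.1.rev else y.1, y.2) := by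
    by_cases hk : p k <;> simp [hk, tw_apply]
  rw [list_prod_map_apply_of_forall_ne (List.nodup_finRange n) (List.mem_finRange x.2)]
  · simp [factor_apply]
  · intro k hk
    simp [factor_apply, hk.symm]
  · intro k hk
    simp [factor_apply, hk.symm]

theorem prod_tw_eq_twist_one :
    ((List.finRange n).map (tw n)).prod = finProdFinEquiv.permCongrHom (twist 1) := by
  ext x : 1
  obtain ⟨x, rfl⟩ := finProdFinEquiv.surjective x
  simpa using prod_tw_ite_apply (fun _ => True) x

theorem linL3Gen_eq_twist_adjSwap (i : Fin (n - 1)) :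
    linL3Gen n i = finProdFinEquiv.permCongrHom (twist (adjSwap i)) := by
  let a : Fin n := ⟨i, by omega⟩
  let b : Fin n := ⟨i + 1, by omega⟩
  have hab : a ≠ b := by simp [a, b]
  have crossing : linL3Gen n i = lowTw n i *
      (swap (finProdFinEquiv (0, a)) (finProdFinEquiv (1, b)) *
        swap (finProdFinEquiv (0, b)) (finProdFinEquiv (1, a))) * highTw n i := by
    rw [linL3Gen]
    congr 4 <;> (ext; grind [finProdFinEquiv_apply_val])
  ext x : 1
  obtain ⟨⟨ε, j⟩, rfl⟩ := finProdFinEquiv.surjective x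
  rw [crossing, lowTw, highTw]
  simp only [Perm.mul_apply, prod_tw_ite_apply, ← finProdFinEquiv.injective.map_swap,
    swap_swap_cross_apply hab, permCongrHom_coe, permCongr_apply, symm_apply_apply, twist_apply]
  have low_iff : (swap a b j : ℕ) < i ↔ (j : ℕ) < i := by
    simp only [swap_apply_def, a, b, Fin.ext_iff]
    grind
  have mid_iff : j = a ∨ j = b ↔ (j : ℕ) = i ∨ (j : ℕ) = i + 1 := by
    simp only [a, b, Fin.ext_iff]
  -- Exactly one of the three factors exchanges the copies at `j`.
  refine congrArg _ (Prod.ext ?_ rfl)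
  simp only [low_iff, mid_iff]
  grind

end LinGenerators

theorem case6_u0_determined_general {n k : ℕ} (hk : 2 ≤ k) (hkn : k + 4 ≤ n)
    {u : Perm (Fin (2 * n))} (hu : ∀ x, u x ≠ x)
    (hcomm : ∀ i : Fin (n - 1), (i : ℕ) ≠ k → Commute u (linL3Gen n i)) :
    u = ((List.finRange n).map (tw n)).prod := by
  obtain ⟨u, rfl⟩ := finProdFinEquiv.permCongrHom.surjective u
  rw [prod_tw_eq_twist_one]
  refine congrArg _ <| eq_twist_one_of_commute_twist_adjSwap hk hkn (fun x hx => ?_) fun i hi => ?_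
  · exact hu (finProdFinEquiv x) (by simp [hx])
  · rw [← commute_map_iff finProdFinEquiv.permCongrHom.injective, ← linL3Gen_eq_twist_adjSwap]
    exact hcomm i hi

/-- key step in Case 6 of the proof of Theorem 1. Let `n ≥ 7` and let
`v_i = ρ_{L3}(σ_i)`, `1 ≤ i ≤ n-1`. If `u₀ ∈ Sym_{2n}` is a product of `n`
transpositions with pairwise disjoint supports and commutes with `v_i` for every
`1 ≤ i ≤ n-1` with `i ≠ 4`, then `u₀ = ∏_{j=1}^{n}(j, n+j)`. (Here the generator of
1-based index `i` is `linL3Gen n ⟨i-1, _⟩`, so `i ≠ 4` reads `(i : ℕ) ≠ 3`.) -/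
theorem case6_u0_determined (n : ℕ) (hn : 7 ≤ n) (u0 : Equiv.Perm (Fin (2 * n)))
    (hu0 : IsProdOfDisjointTranspositions n u0)
    (hcomm : ∀ i : Fin (n - 1), (i : ℕ) ≠ 3 → Commute u0 (linL3Gen n i)) :
    u0 = ((List.finRange n).map (tw n)).prod := by
  exact case6_u0_determined_general (k := 3) (by norm_num) hn hu0.apply_ne_self hcomm
end

section
/- Let n ≥ 7. For 1 ≤ i ≤ n−1 define v_i = ∏_{j=1}^{i−1}(j, n+j) · (i, n+i+1)(i+1, n+i) · ∏_{j=i+2}^{n}(j, n+j) ∈ Sym_{2n}. Then there is no u_0 ∈ Sym_{2n} which is a product of n transpositions with pairwise disjoint supports, commutes with v_i for every 1 ≤ i ≤ n−1 with i ≠ 4, and satisfies the braid relation u_0 v_4 u_0 = v_4 u_0 v_4. In particular, for u_0 = ∏_{j=1}^{n}(j, n+j) one has u_0 v_4 u_0 = v_4 ≠ u_0 = v_4 u_0 v_4. -/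
/-!
Arrange the points in a grid of `n` columns `{j, n + j}`, `0 ≤ j < n`, with
two sheets. Then `v_i` (indexed from `0`) is the exchange of the two sheets composed with the
transposition of columns `i` and `i + 1`; the sheet exchanges cancel in `v_i v_j`, whose support is
therefore a union of columns.

Let `u` commute with every `v_i` with `i ≠ k`. Then `u` preserves the support of each product
`v_i v_j` with `i, j ≠ k`. Column `k` is the support of `v_{k-2} v_{k-1}` minus that of
`v_{k-2} v_{k+2}`, and column `k + 1` is the support of `v_{k+1} v_{k+2}` minus the same set, so `u`
preserves both columns. As `v_k` exchanges them, `u v_k u` maps column `k` to column `k + 1` whereas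
`v_k u v_k` maps it to itself.
-/

open Equiv

lemma mul_mul_ne_mul_mul_of_mapsTo {α : Type*} {u v : Perm α} {C D : Set α}
    (hC : C.Nonempty) (hCD : Disjoint C D) (huC : Set.MapsTo u C C) (huD : Set.MapsTo u D D)
    (hvC : Set.MapsTo v C D) (hvD : Set.MapsTo v D C) : u * v * u ≠ v * u * v := by
  intro braid
  obtain ⟨x, hx⟩ := hC
  have huvu : (u * v * u) x ∈ D := huD (hvC (huC hx))
  have hvuv : (v * u * v) x ∈ C := hvD (huD (hvC hx))
  exact hCD.ne_of_mem hvuv huvu (by rw [braid])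

lemma swap_mul_swap_cross_apply {ι : Type*} [DecidableEq ι] {x y : ι} (hxy : x ≠ y)
    (c : ι) (a : Fin 2) :
    (swap (x, 0) (y, 1) * swap (y, 0) (x, 1) : Perm (ι × Fin 2)) (c, a) =
      (swap x y c, if c = x ∨ c = y then a.rev else a) := by
  fin_cases a <;> simp only [Perm.mul_apply, swap_apply_def, Prod.mk.injEq] <;> grind

/-- The points permuted by `Sym_{2n}` as a grid: the point in column `j` and sheet `a` is
`j + n * a`, so that column `j` is `{j, n + j}`. -/
def gridPoint (n : ℕ) : Fin n × Fin 2 ≃ Fin (2 * n) :=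
  (prodComm _ _).trans finProdFinEquiv

/-- The column `j` of the point `j` or `n + j` in the grid `gridPoint n`. -/
def column {n : ℕ} (x : Fin (2 * n)) : Fin n :=
  ((gridPoint n).symm x).1

/-- The transposition of the columns `i` and `i + 1`, through which `v_i` permutes the columns. -/
def columnSwap (n : ℕ) (i : Fin (n - 1)) : Perm (Fin n) :=
  swap ⟨i, by omega⟩ ⟨i + 1, by omega⟩

section Grid

variable {n : ℕ}

@[simp]
lemma column_gridPoint (p : Fin n × Fin 2) : column (gridPoint n p) = p.1 := by
  simp [column]

lemma perm_ext_gridPoint {f g : Perm (Fin (2 * n))}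
    (h : ∀ c a, f (gridPoint n (c, a)) = g (gridPoint n (c, a))) : f = g := by
  ext x
  obtain ⟨⟨c, a⟩, rfl⟩ := (gridPoint n).surjective x
  rw [h]

lemma mk_eq_gridPoint_zero {j : ℕ} (hj : j < n) :
    (⟨j, by omega⟩ : Fin (2 * n)) = gridPoint n (⟨j, hj⟩, 0) := by
  simp [gridPoint, Fin.ext_iff]

lemma mk_add_eq_gridPoint_one {j : ℕ} (hj : j < n) :
    (⟨n + j, by omega⟩ : Fin (2 * n)) = gridPoint n (⟨j, hj⟩, 1) := by
  simp [gridPoint, Fin.ext_iff, add_comm]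

lemma tw_eq_permCongrHom (j : Fin n) :
    tw n j = (gridPoint n).permCongrHom (Perm.prodExtendRight j Fin.revPerm) := by
  have hswap : Perm.prodExtendRight j Fin.revPerm = swap (j, (0 : Fin 2)) (j, 1) := by
    ext ⟨c, a⟩ : 1
    fin_cases a <;> simp [Perm.prodExtendRight, swap_apply_def]
  calc tw n j = swap (gridPoint n (j, 0)) (gridPoint n (j, 1)) := by
        rw [tw, mk_eq_gridPoint_zero j.isLt, mk_add_eq_gridPoint_one j.isLt]
    _ = (gridPoint n).permCongrHom (Perm.prodExtendRight j Fin.revPerm) := by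
        rw [hswap]
        exact (symm_trans_swap_trans _ _ _).symm

lemma prod_ite_tw_gridPoint (P : Fin n → Prop) [DecidablePred P] (c : Fin n) (a : Fin 2) :
    ((List.finRange n).map fun j => if P j then tw n j else 1).prod (gridPoint n (c, a)) =
      gridPoint n (c, if P c then a.rev else a) := by
  let σ : Fin n → Perm (Fin 2) := fun j => if P j then Fin.revPerm else 1
  have hfactor (j : Fin n) : (if P j then tw n j else 1) =
      (gridPoint n).permCongrHom (Perm.prodExtendRight j (σ j)) := by
    by_cases hj : P j
    · simp only [σ, hj, if_true, tw_eq_permCongrHom]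
    · have hone : Perm.prodExtendRight j (1 : Perm (Fin 2)) = 1 := by
        ext ⟨c, a⟩ : 1
        simp only [Perm.prodExtendRight, Perm.one_apply]
        grind
      simp only [σ, hj, if_false, hone, map_one]
  have hprod : ((List.finRange n).map fun j => if P j then tw n j else 1).prod =
      (gridPoint n).permCongrHom (prodCongrRight σ) := by
    rw [← Perm.prod_prodExtendRight σ (List.nodup_finRange n) List.mem_finRange, map_list_prod,
      List.map_map]
    simp only [hfactor, Function.comp_def]
  rw [hprod]
  by_cases hc : P c <;> simp [permCongrHom, σ, hc]

lemma prod_tw_gridPoint (c : Fin n) (a : Fin 2) :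
    ((List.finRange n).map (tw n)).prod (gridPoint n (c, a)) = gridPoint n (c, a.rev) := by
  simpa using prod_ite_tw_gridPoint (fun _ => True) c a

lemma swap_mul_swap_gridPoint (i : Fin (n - 1)) (c : Fin n) (a : Fin 2) :
    (swap ⟨i, by omega⟩ ⟨n + i + 1, by omega⟩ * swap ⟨i + 1, by omega⟩ ⟨n + i, by omega⟩ :
      Perm (Fin (2 * n))) (gridPoint n (c, a)) =
      gridPoint n (columnSwap n i c, if (c : ℕ) = i ∨ (c : ℕ) = i + 1 then a.rev else a) := by
  have hi : (i : ℕ) < n := by omega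
  have hi' : (i : ℕ) + 1 < n := by omega
  simp only [add_assoc n, mk_eq_gridPoint_zero hi, mk_eq_gridPoint_zero hi',
    mk_add_eq_gridPoint_one hi, mk_add_eq_gridPoint_one hi', Perm.mul_apply,
    ← (gridPoint n).injective.map_swap]
  rw [← Perm.mul_apply, swap_mul_swap_cross_apply (by simp)]
  simp only [columnSwap, Fin.ext_iff]

lemma linL3Gen_gridPoint (i : Fin (n - 1)) (c : Fin n) (a : Fin 2) :
    linL3Gen n i (gridPoint n (c, a)) = gridPoint n (columnSwap n i c, a.rev) := by
  rw [linL3Gen, lowTw, highTw, Perm.mul_apply, Perm.mul_apply,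
    prod_ite_tw_gridPoint (fun j => (i : ℕ) + 2 ≤ j), swap_mul_swap_gridPoint,
    prod_ite_tw_gridPoint (fun j => (j : ℕ) < i)]
  congr 2
  grind [columnSwap]

lemma column_linL3Gen (i : Fin (n - 1)) (x : Fin (2 * n)) :
    column (linL3Gen n i x) = columnSwap n i (column x) := by
  obtain ⟨⟨c, a⟩, rfl⟩ := (gridPoint n).surjective x
  simp [linL3Gen_gridPoint]

lemma linL3Gen_mul_self (i : Fin (n - 1)) : linL3Gen n i * linL3Gen n i = 1 :=
  perm_ext_gridPoint fun c a => by simp [linL3Gen_gridPoint, columnSwap]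

lemma prod_tw_mul_self :
    ((List.finRange n).map (tw n)).prod * ((List.finRange n).map (tw n)).prod = 1 :=
  perm_ext_gridPoint fun c a => by simp [prod_tw_gridPoint]

lemma commute_prod_tw_linL3Gen (i : Fin (n - 1)) :
    Commute ((List.finRange n).map (tw n)).prod (linL3Gen n i) :=
  perm_ext_gridPoint fun c a => by simp [prod_tw_gridPoint, linL3Gen_gridPoint]

lemma linL3Gen_ne_prod_tw (i : Fin (n - 1)) :
    linL3Gen n i ≠ ((List.finRange n).map (tw n)).prod := by
  intro h
  have := Perm.congr_fun h (gridPoint n (⟨i, by omega⟩, 0))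
  simp [linL3Gen_gridPoint, prod_tw_gridPoint, columnSwap] at this

lemma mem_support_linL3Gen_mul {i j : Fin (n - 1)} {x : Fin (2 * n)} :
    x ∈ (linL3Gen n i * linL3Gen n j).support ↔
      columnSwap n i (columnSwap n j (column x)) ≠ column x := by
  obtain ⟨⟨c, a⟩, rfl⟩ := (gridPoint n).surjective x
  simp [linL3Gen_gridPoint]

lemma mem_support_linL3Gen_mul_succ {i j : Fin (n - 1)} (hij : (j : ℕ) = i + 1)
    {x : Fin (2 * n)} :
    x ∈ (linL3Gen n i * linL3Gen n j).support ↔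
      (column x : ℕ) = i ∨ (column x : ℕ) = i + 1 ∨ (column x : ℕ) = i + 2 := by
  rw [mem_support_linL3Gen_mul]
  grind [columnSwap]

lemma mem_support_linL3Gen_mul_of_add_two_le {i j : Fin (n - 1)} (hij : (i : ℕ) + 2 ≤ j)
    {x : Fin (2 * n)} :
    x ∈ (linL3Gen n i * linL3Gen n j).support ↔
      (column x : ℕ) = i ∨ (column x : ℕ) = i + 1 ∨ (column x : ℕ) = j ∨
        (column x : ℕ) = j + 1 := by
  rw [mem_support_linL3Gen_mul]
  grind [columnSwap]

end Grid

section Commuting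

variable {n : ℕ} {k : Fin (n - 1)} {u : Perm (Fin (2 * n))}

lemma apply_mem_support_linL3Gen_mul_iff (hu : ∀ i ≠ k, Commute u (linL3Gen n i))
    {i j : Fin (n - 1)} (hi : i ≠ k) (hj : j ≠ k) (x : Fin (2 * n)) :
    u x ∈ (linL3Gen n i * linL3Gen n j).support ↔
      x ∈ (linL3Gen n i * linL3Gen n j).support :=
  Perm.mem_support_iff_of_commute ((hu i hi).mul_right (hu j hj)) x

lemma column_apply_eq_iff_of_commute (hk : 2 ≤ (k : ℕ)) (hkn : (k : ℕ) + 4 ≤ n)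
    (hu : ∀ i ≠ k, Commute u (linL3Gen n i)) (x : Fin (2 * n)) :
    (column (u x) : ℕ) = k ↔ (column x : ℕ) = k := by
  have column_eq_iff (y : Fin (2 * n)) : (column y : ℕ) = k ↔
      y ∈ (linL3Gen n ⟨k - 2, by omega⟩ * linL3Gen n ⟨k - 1, by omega⟩).support ∧
        y ∉ (linL3Gen n ⟨k - 2, by omega⟩ * linL3Gen n ⟨k + 2, by omega⟩).support := by
    rw [mem_support_linL3Gen_mul_succ (by grind), mem_support_linL3Gen_mul_of_add_two_le (by grind)]
    grind
  rw [column_eq_iff, column_eq_iff, apply_mem_support_linL3Gen_mul_iff hu (by grind) (by grind),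
    apply_mem_support_linL3Gen_mul_iff hu (by grind) (by grind)]

lemma column_apply_eq_succ_iff_of_commute (hk : 2 ≤ (k : ℕ)) (hkn : (k : ℕ) + 4 ≤ n)
    (hu : ∀ i ≠ k, Commute u (linL3Gen n i)) (x : Fin (2 * n)) :
    (column (u x) : ℕ) = k + 1 ↔ (column x : ℕ) = k + 1 := by
  have column_eq_iff (y : Fin (2 * n)) : (column y : ℕ) = k + 1 ↔
      y ∈ (linL3Gen n ⟨k + 1, by omega⟩ * linL3Gen n ⟨k + 2, by omega⟩).support ∧
        y ∉ (linL3Gen n ⟨k - 2, by omega⟩ * linL3Gen n ⟨k + 2, by omega⟩).support := by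
    rw [mem_support_linL3Gen_mul_succ (by grind), mem_support_linL3Gen_mul_of_add_two_le (by grind)]
    grind
  rw [column_eq_iff, column_eq_iff, apply_mem_support_linL3Gen_mul_iff hu (by grind) (by grind),
    apply_mem_support_linL3Gen_mul_iff hu (by grind) (by grind)]

theorem mul_linL3Gen_mul_ne_of_commute (hk : 2 ≤ (k : ℕ)) (hkn : (k : ℕ) + 4 ≤ n)
    (hu : ∀ i ≠ k, Commute u (linL3Gen n i)) :
    u * linL3Gen n k * u ≠ linL3Gen n k * u * linL3Gen n k := by
  refine mul_mul_ne_mul_mul_of_mapsTo (C := {x | (column x : ℕ) = k})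
    (D := {x | (column x : ℕ) = k + 1}) ⟨gridPoint n (⟨k, by omega⟩, 0), by simp⟩ ?_
    (fun x => (column_apply_eq_iff_of_commute hk hkn hu x).2)
    (fun x => (column_apply_eq_succ_iff_of_commute hk hkn hu x).2) ?_ ?_
  · exact Set.disjoint_left.2 fun x (hx : _ = _) (hx' : _ = _) => by omega
  all_goals
    intro x hx
    simp only [Set.mem_ofPred_eq, column_linL3Gen] at hx ⊢
    grind [columnSwap]

end Commuting

theorem case6_no_u0_general (n : ℕ) (k : Fin (n - 1)) (hk : 2 ≤ (k : ℕ)) (hkn : (k : ℕ) + 4 ≤ n) :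
    (¬ ∃ u0 : Perm (Fin (2 * n)),
      (∀ i ≠ k, Commute u0 (linL3Gen n i)) ∧
      u0 * linL3Gen n k * u0 = linL3Gen n k * u0 * linL3Gen n k) ∧
    ((List.finRange n).map (tw n)).prod * linL3Gen n k * ((List.finRange n).map (tw n)).prod =
      linL3Gen n k ∧
    linL3Gen n k * ((List.finRange n).map (tw n)).prod * linL3Gen n k =
      ((List.finRange n).map (tw n)).prod ∧
    linL3Gen n k ≠ ((List.finRange n).map (tw n)).prod := by
  refine ⟨?_, ?_, ?_, linL3Gen_ne_prod_tw k⟩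
  · rintro ⟨u, hu, braid⟩
    exact mul_linL3Gen_mul_ne_of_commute hk hkn hu braid
  · rw [(commute_prod_tw_linL3Gen k).eq, mul_assoc, prod_tw_mul_self, mul_one]
  · rw [← (commute_prod_tw_linL3Gen k).eq, mul_assoc, linL3Gen_mul_self, mul_one]

/-- Case 6 of the proof of Theorem 1. Let `n ≥ 7` and let
`v_i = ρ_{L3}(σ_i)`, `1 ≤ i ≤ n-1` (the generator of 1-based index `i` is
`linL3Gen n ⟨i-1, _⟩`; in particular `v_4 = linL3Gen n ⟨3, _⟩`). There is no
`u₀ ∈ Sym_{2n}` which is a product of `n` transpositions with pairwise disjoint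
supports, commutes with `v_i` for every `1 ≤ i ≤ n-1` with `i ≠ 4`, and satisfies the
braid relation `u₀ v₄ u₀ = v₄ u₀ v₄`. In particular, for `u₀ = ∏_{j=1}^{n}(j, n+j)` one
has `u₀ v₄ u₀ = v₄ ≠ u₀ = v₄ u₀ v₄`. -/
theorem case6_no_u0 (n : ℕ) (hn : 7 ≤ n) :
    (¬ ∃ u0 : Equiv.Perm (Fin (2 * n)),
      IsProdOfDisjointTranspositions n u0 ∧
      (∀ i : Fin (n - 1), (i : ℕ) ≠ 3 → Commute u0 (linL3Gen n i)) ∧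
      u0 * linL3Gen n ⟨3, by omega⟩ * u0 =
        linL3Gen n ⟨3, by omega⟩ * u0 * linL3Gen n ⟨3, by omega⟩) ∧
    ((List.finRange n).map (tw n)).prod * linL3Gen n ⟨3, by omega⟩ *
        ((List.finRange n).map (tw n)).prod = linL3Gen n ⟨3, by omega⟩ ∧
    linL3Gen n ⟨3, by omega⟩ * ((List.finRange n).map (tw n)).prod *
        linL3Gen n ⟨3, by omega⟩ = ((List.finRange n).map (tw n)).prod ∧
    linL3Gen n ⟨3, by omega⟩ ≠ ((List.finRange n).map (tw n)).prod := by
  obtain ⟨hno, hflip⟩ := case6_no_u0_general n ⟨3, by omega⟩ (by simp) (by simpa using hn)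
  exact ⟨fun ⟨u, _, hu, braid⟩ => hno ⟨u, fun i hi => hu i (Fin.val_ne_of_ne hi), braid⟩, hflip⟩
end
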